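/- arXiv:1609.00135 — 4 statements merged into one kernel-verified Lean document; each statement's English description precedes it below -/
import Mathlib

section
/- Let x be a solution of the heavy ball equation with vanishing damping and source term g satisfying ∫₀^∞ (1+t)^α ‖g(t)‖ dt < ∞. Then ∫₀^∞ (1+t)^α (Φ(x(t)) − Φ*) dt < ∞. -/
open MeasureTheory Filter Real Set RealInnerProductSpace

/-!
Write the damping as `c / w`, fix a minimizer `p` and let `v = x'`. The function
`F = 3 / (2c) * w² (‖v‖² / 2 + Φ(x) - Φ(p)) + w ⟪x - p, v⟫ + (c - w') ‖x - p‖² / 2`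
dominates a positive definite quadratic form in `(w ‖v‖, ‖x - p‖)` as soon as
`w' ≤ θ < c / 3`. Along a solution, `w ⟪x - p, v⟫` produces `-w (Φ(x) - Φ(p))` by convexity, the
damping absorbs the kinetic terms, and the remaining terms contain `w g` or `w''`, so that
`F' ≤ m (1 + F) - (1 - 3 θ / c) w (Φ(x) - Φ(p))` with `m` integrable. Gronwall's inequality bounds
`F`, and integrating once more bounds `∫ w (Φ(x) - Φ(p))`. For `w = (1 + t) ^ α` with `α < 1`, `w'`
tends to `0` and `w''` is integrable.
-/

section Gronwall

variable {a t : ℝ}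

lemma intervalIntegral_le_setIntegral_Ici_norm {m : ℝ → ℝ} (hm : IntegrableOn m (Ici a))
    (ht : a ≤ t) : ∫ s in a..t, m s ≤ ∫ s in Ici a, ‖m s‖ :=
  calc ∫ s in a..t, m s
    _ ≤ ‖∫ s in a..t, m s‖ := le_norm_self _
    _ ≤ ∫ s in a..t, ‖m s‖ := intervalIntegral.norm_integral_le_integral_norm ht
    _ = ∫ s in Ioc a t, ‖m s‖ := intervalIntegral.integral_of_le ht
    _ ≤ ∫ s in Ici a, ‖m s‖ :=
      setIntegral_mono_set hm.norm (ae_of_all _ fun _ ↦ norm_nonneg _)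
        (Ioc_subset_Ioi_self.trans Ioi_subset_Ici_self).eventuallyLE

lemma sub_le_intervalIntegral_of_hasDerivAt_le {f f' φ : ℝ → ℝ}
    (hf : ∀ s ∈ Ici a, HasDerivAt f (f' s) s) (hφ : LocallyIntegrableOn φ (Ici a))
    (hle : ∀ s ∈ Ici a, f' s ≤ φ s) (ht : a ≤ t) : f t - f a ≤ ∫ s in a..t, φ s :=
  intervalIntegral.sub_le_integral_of_hasDeriv_right_of_le ht
    (fun s hs ↦ (hf s hs.1).continuousAt.continuousWithinAt)
    (fun s hs ↦ (hf s hs.1.le).hasDerivWithinAt)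
    (hφ.integrableOn_compact_subset Icc_subset_Ici_self isCompact_Icc)
    (fun s hs ↦ hle s hs.1.le)

lemma le_mul_exp_setIntegral_norm_of_hasDerivAt_le_mul {f f' m : ℝ → ℝ}
    (hf : ∀ s ∈ Ici a, HasDerivAt f (f' s) s) (hpos : ∀ s ∈ Ici a, 0 < f s)
    (hm : IntegrableOn m (Ici a)) (hle : ∀ s ∈ Ici a, f' s ≤ m s * f s) (ht : a ≤ t) :
    f t ≤ f a * exp (∫ s in Ici a, ‖m s‖) := by
  have hlog : log (f t) - log (f a) ≤ ∫ s in a..t, m s :=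
    sub_le_intervalIntegral_of_hasDerivAt_le (fun s hs ↦ (hf s hs).log (hpos s hs).ne')
      hm.locallyIntegrableOn (fun s hs ↦ (div_le_iff₀ (hpos s hs)).2 (hle s hs)) ht
  have hint := intervalIntegral_le_setIntegral_Ici_norm hm ht
  calc f t
    _ = exp (log (f t)) := (exp_log (hpos t ht)).symm
    _ ≤ exp (log (f a) + ∫ s in Ici a, ‖m s‖) := exp_le_exp.2 (by linarith)
    _ = f a * exp (∫ s in Ici a, ‖m s‖) := by rw [exp_add, exp_log (hpos a self_mem_Ici)]

lemma integrableOn_Ici_of_hasDerivAt_le_sub {f f' r q : ℝ → ℝ}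
    (hf : ∀ s ∈ Ici a, HasDerivAt f (f' s) s) (hf₀ : ∀ s ∈ Ici a, 0 ≤ f s)
    (hr : IntegrableOn r (Ici a)) (hq : LocallyIntegrableOn q (Ici a))
    (hq₀ : ∀ s ∈ Ici a, 0 ≤ q s) (hle : ∀ s ∈ Ici a, f' s ≤ r s - q s) :
    IntegrableOn q (Ici a) := by
  have hq_Icc (t : ℝ) : IntegrableOn q (Icc a t) :=
    hq.integrableOn_compact_subset Icc_subset_Ici_self isCompact_Icc
  have hq_bound {t : ℝ} (ht : a ≤ t) : ∫ s in a..t, q s ≤ f a + ∫ s in Ici a, ‖r s‖ := by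
    have hsub := sub_le_intervalIntegral_of_hasDerivAt_le hf (hr.locallyIntegrableOn.sub hq) hle ht
    simp only [Pi.sub_apply] at hsub
    rw [intervalIntegral.integral_sub
      ((intervalIntegrable_iff_integrableOn_Icc_of_le ht).2 (hr.mono_set Icc_subset_Ici_self))
      ((intervalIntegrable_iff_integrableOn_Icc_of_le ht).2 (hq_Icc t))] at hsub
    linarith [hf₀ t ht, intervalIntegral_le_setIntegral_Ici_norm hr ht]
  rw [integrableOn_Ici_iff_integrableOn_Ioi]
  refine integrableOn_Ioi_of_intervalIntegral_norm_bounded (f a + ∫ s in Ici a, ‖r s‖) a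
    (fun t ↦ (hq_Icc t).mono_set Ioc_subset_Icc_self) tendsto_id ?_
  filter_upwards [eventually_ge_atTop a] with t ht
  refine (intervalIntegral.integral_congr fun s hs ↦ ?_).trans_le (hq_bound ht)
  exact norm_of_nonneg (hq₀ s (uIcc_of_le ht ▸ hs).1)

lemma integrableOn_Ici_of_hasDerivAt_le_mul_sub {f f' m q : ℝ → ℝ}
    (hf : ∀ s ∈ Ici a, HasDerivAt f (f' s) s) (hpos : ∀ s ∈ Ici a, 0 < f s)
    (hm : IntegrableOn m (Ici a)) (hq : LocallyIntegrableOn q (Ici a))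
    (hq₀ : ∀ s ∈ Ici a, 0 ≤ q s) (hle : ∀ s ∈ Ici a, f' s ≤ m s * f s - q s) :
    IntegrableOn q (Ici a) := by
  set C := f a * exp (∫ s in Ici a, ‖m s‖)
  have hf_bound (s) (hs : s ∈ Ici a) : f s ≤ C :=
    le_mul_exp_setIntegral_norm_of_hasDerivAt_le_mul hf hpos hm
      (fun s hs ↦ (hle s hs).trans (sub_le_self _ (hq₀ s hs))) hs
  refine integrableOn_Ici_of_hasDerivAt_le_sub hf (fun s hs ↦ (hpos s hs).le)
    (hm.norm.mul_const C) hq hq₀ fun s hs ↦ (hle s hs).trans (sub_le_sub_right ?_ _)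
  calc m s * f s
    _ ≤ ‖m s‖ * f s := mul_le_mul_of_nonneg_right (le_norm_self _) (hpos s hs).le
    _ ≤ ‖m s‖ * C := mul_le_mul_of_nonneg_left (hf_bound s hs) (norm_nonneg _)

end Gronwall

lemma sub_le_apply_sub_of_convexOn_of_hasFDerivAt {E : Type*} [NormedAddCommGroup E]
    [NormedSpace ℝ E] {s : Set E} {f : E → ℝ} {f' : E →L[ℝ] ℝ} {u p : E} (hf : ConvexOn ℝ s f)
    (hu : u ∈ s) (hp : p ∈ s) (hf' : HasFDerivAt f f' u) : f u - f p ≤ f' (u - p) := by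
  have hline : ConvexOn ℝ (AffineMap.lineMap u p ⁻¹' s) fun r : ℝ ↦ f (AffineMap.lineMap u p r) :=
    hf.comp_affineMap (AffineMap.lineMap u p)
  have hderiv : HasDerivAt (fun r : ℝ ↦ f (AffineMap.lineMap u p r)) (f' (p - u)) 0 := by
    rw [← AffineMap.lineMap_apply_zero (k := ℝ) u p] at hf'
    exact hf'.comp_hasDerivAt (0 : ℝ) AffineMap.hasDerivAt_lineMap
  have hslope : f' (p - u) ≤ f p - f u := by
    simpa [slope_def_field] using
      hline.le_slope_of_hasDerivAt (by simpa using hu) (by simpa using hp) one_pos hderiv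
  rw [← neg_sub p u, map_neg]
  linarith

lemma mul_sq_add_sq_le_mul_quadratic_form (a b c x y : ℝ) :
    (4 * a * c - b ^ 2) * (x ^ 2 + y ^ 2) ≤
      4 * (a + c) * (a * x ^ 2 + b * (x * y) + c * y ^ 2) := by
  nlinarith [sq_nonneg (2 * a * x + b * y), sq_nonneg (2 * c * y + b * x)]

/-- `w` is a positive weight on `[a, ∞)` with derivatives `w'` and `w''`, the latter integrable,
whose slope stays below `L` in the limit. The damping studied here is `c / w`, with
`L = c / 3`; the vanishing damping `c / (1 + t) ^ α` corresponds to `w = (1 + t) ^ α`. -/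
structure IsSlopeBoundedWeight (L a : ℝ) (w w' w'' : ℝ → ℝ) : Prop where
  pos : ∀ t ∈ Ici a, 0 < w t
  hasDerivAt : ∀ t ∈ Ici a, HasDerivAt w (w' t) t
  hasDerivAt_deriv : ∀ t ∈ Ici a, HasDerivAt w' (w'' t) t
  integrableOn_deriv2 : IntegrableOn w'' (Ici a)
  eventually_deriv_le : ∃ θ < L, ∀ᶠ t in atTop, w' t ≤ θ

lemma IsSlopeBoundedWeight.continuousOn {L a : ℝ} {w w' w'' : ℝ → ℝ}
    (hw : IsSlopeBoundedWeight L a w w' w'') : ContinuousOn w (Ici a) :=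
  fun t ht ↦ (hw.hasDerivAt t ht).continuousAt.continuousWithinAt

section PowerWeight

variable {α t : ℝ}

lemma hasDerivAt_one_add_rpow (α : ℝ) (ht : 0 ≤ t) :
    HasDerivAt (fun t : ℝ ↦ (1 + t) ^ α) (α * (1 + t) ^ (α - 1)) t := by
  simpa using ((hasDerivAt_id t).const_add 1).rpow_const (p := α)
    (Or.inl (by simp only [id]; positivity))

lemma integrableOn_Ici_one_add_rpow (hα : α < -1) :
    IntegrableOn (fun t : ℝ ↦ (1 + t) ^ α) (Ici 0) := by
  rw [integrableOn_Ici_iff_integrableOn_Ioi]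
  simpa only [add_comm] using integrableOn_add_rpow_Ioi_of_lt hα (neg_one_lt_zero (R := ℝ))

lemma tendsto_one_add_rpow_atTop_of_neg (hα : α < 0) :
    Tendsto (fun t : ℝ ↦ (1 + t) ^ α) atTop (nhds 0) := by
  simpa [Function.comp_def] using (tendsto_rpow_neg_atTop (neg_pos.2 hα)).comp
    (tendsto_atTop_add_const_left atTop (1 : ℝ) tendsto_id)

lemma isSlopeBoundedWeight_one_add_rpow {L : ℝ} (hL : 0 < L) (hα : α < 1) :
    IsSlopeBoundedWeight L 0 (fun t ↦ (1 + t) ^ α) (fun t ↦ α * (1 + t) ^ (α - 1))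
      (fun t ↦ α * ((α - 1) * (1 + t) ^ (α - 1 - 1))) where
  pos t ht := rpow_pos_of_pos (add_pos_of_pos_of_nonneg one_pos ht) α
  hasDerivAt t ht := hasDerivAt_one_add_rpow α ht
  hasDerivAt_deriv t ht := (hasDerivAt_one_add_rpow (α - 1) ht).const_mul α
  integrableOn_deriv2 :=
    ((integrableOn_Ici_one_add_rpow (by linarith)).const_mul (α - 1)).const_mul α
  eventually_deriv_le := by
    have hlim := (tendsto_one_add_rpow_atTop_of_neg (sub_neg.2 hα)).const_mul α
    rw [mul_zero] at hlim
    exact ⟨L / 2, half_lt_self hL, hlim.eventually_le_const (half_pos hL)⟩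

end PowerWeight

section HeavyBall

variable {H : Type*} [NormedAddCommGroup H] [InnerProductSpace ℝ H]
  {c θ L a t : ℝ} {w w' w'' γ : ℝ → ℝ} {Φ : H → ℝ} {Φ' : H → H} {p : H} {g x v : ℝ → H}

/-- `x` solves the heavy ball equation `x'' + γ x' + Φ' (x) = g` on `[a, ∞)`, with velocity
`v = x'`; the equation is stated as a first-order system, so the acceleration is not a parameter. -/
structure IsHeavyBallSolution (γ : ℝ → ℝ) (Φ' : H → H) (g : ℝ → H) (a : ℝ) (x v : ℝ → H) :
    Prop where
  hasDerivAt_position : ∀ t ∈ Ici a, HasDerivAt x (v t) t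
  hasDerivAt_velocity : ∀ t ∈ Ici a, HasDerivAt v (g t - γ t • v t - Φ' (x t)) t

/-- The Lyapunov function of the heavy ball equation with damping `c / w`, relative to the point
`p`. The factor `3 / (2 * c)` makes both its coercivity and its dissipation hold up to the same
threshold `w' < c / 3`. -/
noncomputable def lyapunov (c : ℝ) (w w' : ℝ → ℝ) (Φ : H → ℝ) (p : H) (x v : ℝ → H) (t : ℝ) : ℝ :=
  3 / (2 * c) * (w t ^ 2 * (‖v t‖ ^ 2 / 2 + (Φ (x t) - Φ p))) + w t * ⟪x t - p, v t⟫
    + (c - w' t) * (‖x t - p‖ ^ 2 / 2)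

lemma quadratic_form_le_lyapunov (hc : 0 < c) (hw : 0 ≤ w t) (hw' : w' t ≤ θ)
    (hp : Φ p ≤ Φ (x t)) :
    3 / (4 * c) * (w t * ‖v t‖) ^ 2 + -1 * (w t * ‖v t‖ * ‖x t - p‖)
      + (c - θ) / 2 * ‖x t - p‖ ^ 2 ≤ lyapunov c w w' Φ p x v t := by
  have hinner : -(‖x t - p‖ * ‖v t‖) ≤ ⟪x t - p, v t⟫ :=
    (abs_le.1 (abs_real_inner_le_norm _ _)).1
  have hcross : w t * -(‖x t - p‖ * ‖v t‖) ≤ w t * ⟪x t - p, v t⟫ := by gcongr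
  have hpotential : 0 ≤ 3 / (2 * c) * (w t ^ 2 * (Φ (x t) - Φ p)) := by
    have := sub_nonneg.2 hp
    positivity
  have hdist : (c - θ) * (‖x t - p‖ ^ 2 / 2) ≤ (c - w' t) * (‖x t - p‖ ^ 2 / 2) := by gcongr
  have hkinetic : 3 / (4 * c) * (w t * ‖v t‖) ^ 2 = 3 / (2 * c) * (w t ^ 2 * (‖v t‖ ^ 2 / 2)) := by
    ring
  unfold lyapunov
  linarith

lemma lyapunov_nonneg (hc : 0 < c) (hw : 0 ≤ w t) (hw' : w' t ≤ c / 3) (hp : Φ p ≤ Φ (x t)) :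
    0 ≤ lyapunov c w w' Φ p x v t := by
  refine le_trans ?_ (quadratic_form_le_lyapunov hc hw hw' hp)
  calc 0
    _ ≤ 3 / (4 * c) * (w t * ‖v t‖ - 2 * c / 3 * ‖x t - p‖) ^ 2 := by positivity
    _ = _ := by field_simp; ring

lemma exists_pos_sq_add_sq_le_mul_lyapunov (hc : 0 < c) (hθ : θ < c / 3)
    (hmin : ∀ u, Φ p ≤ Φ u) : ∃ K > 0, ∀ t, 0 ≤ w t → w' t ≤ θ →
      (w t * ‖v t‖) ^ 2 + ‖x t - p‖ ^ 2 ≤ K * lyapunov c w w' Φ p x v t := by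
  set A := 3 / (4 * c)
  set B := (c - θ) / 2
  have hAB : 0 < 4 * (A + B) := by
    have : 0 < c - θ := by linarith
    positivity
  have hdiscr : 0 < 4 * A * B - (-1) ^ 2 := by
    have : 4 * A * B - (-1) ^ 2 = (c / 3 - θ) * (3 / (2 * c)) := by
      simp only [A, B]
      field_simp
      ring
    rw [this]
    exact mul_pos (sub_pos.2 hθ) (by positivity)
  refine ⟨4 * (A + B) / (4 * A * B - (-1) ^ 2), by positivity, fun t hw hw' ↦ ?_⟩
  rw [div_mul_eq_mul_div, le_div_iff₀' hdiscr]
  exact (mul_sq_add_sq_le_mul_quadratic_form ..).trans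
    (mul_le_mul_of_nonneg_left (quadratic_form_le_lyapunov hc hw hw' (hmin _)) hAB.le)

namespace IsHeavyBallSolution

lemma of_second_order {x' x'' : ℝ → H} (hx' : ∀ t ∈ Ici a, HasDerivAt x (x' t) t)
    (hx'' : ∀ t ∈ Ici a, HasDerivAt x' (x'' t) t)
    (hode : ∀ t ∈ Ici a, x'' t + γ t • x' t + Φ' (x t) = g t) :
    IsHeavyBallSolution γ Φ' g a x x' :=
  ⟨hx', fun t ht ↦ (hx'' t ht).congr_deriv (by rw [← hode t ht]; abel)⟩

lemma continuousOn_position (hx : IsHeavyBallSolution γ Φ' g a x v) : ContinuousOn x (Ici a) :=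
  fun t ht ↦ (hx.hasDerivAt_position t ht).continuousAt.continuousWithinAt

lemma hasDerivAt_lyapunov (hx : IsHeavyBallSolution (fun t ↦ c / w t) Φ' g a x v)
    (hw : IsSlopeBoundedWeight L a w w' w'') (hΦ : ∀ u, HasFDerivAt Φ (innerSL ℝ (Φ' u)) u)
    (hc : c ≠ 0) (ht : t ∈ Ici a) :
    HasDerivAt (lyapunov c w w' Φ p x v)
      (3 / (2 * c) * (w t * ⟪v t, w t • g t⟫) + ⟪x t - p, w t • g t⟫
        - w'' t * (‖x t - p‖ ^ 2 / 2) - w t * ⟪Φ' (x t), x t - p⟫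
        + 3 * w' t / c * (w t * (Φ (x t) - Φ p))
        - (1 - 3 * w' t / c) * (w t * ‖v t‖ ^ 2 / 2)) t := by
  have hwt := (hw.pos t ht).ne'
  have hv := hx.hasDerivAt_velocity t ht
  have hdist := (hx.hasDerivAt_position t ht).sub_const p
  have hpotential : HasDerivAt (fun t ↦ Φ (x t)) ⟪Φ' (x t), v t⟫ t :=
    (hΦ (x t)).comp_hasDerivAt t (hx.hasDerivAt_position t ht)
  have hD := (((((hw.hasDerivAt t ht).pow 2).mul
    ((hv.norm_sq.div_const 2).add (hpotential.sub_const (Φ p)))).const_mul (3 / (2 * c))).add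
    ((hw.hasDerivAt t ht).mul (hdist.inner ℝ hv))).add
    (((hw.hasDerivAt_deriv t ht).const_sub c).mul (hdist.norm_sq.div_const 2))
  refine hD.congr_deriv ?_
  simp only [Pi.pow_apply, Pi.add_apply, inner_sub_right, inner_smul_right,
    real_inner_self_eq_norm_sq, real_inner_comm (Φ' (x t))]
  field_simp
  ring

lemma deriv_lyapunov_le (hx : IsHeavyBallSolution (fun t ↦ c / w t) Φ' g a x v)
    (hw : IsSlopeBoundedWeight L a w w' w'') (hΦ : ∀ u, HasFDerivAt Φ (innerSL ℝ (Φ' u)) u)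
    (hc : 0 < c) (hθ : θ < c / 3) (hmin : ∀ u, Φ p ≤ Φ u)
    (hstar : ∀ u, Φ u - Φ p ≤ ⟪Φ' u, u - p⟫) (ht : t ∈ Ici a) (hw' : w' t ≤ θ) :
    deriv (lyapunov c w w' Φ p x v) t ≤
      (3 / (2 * c) * (w t * ‖v t‖) + ‖x t - p‖) * (w t * ‖g t‖) + |w'' t| * ‖x t - p‖ ^ 2
        - (1 - 3 * θ / c) * (w t * (Φ (x t) - Φ p)) := by
  rw [(hx.hasDerivAt_lyapunov hw hΦ hc.ne' ht).deriv]
  have hwt := hw.pos t ht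
  have hnorm : ‖w t • g t‖ = w t * ‖g t‖ := by rw [norm_smul, norm_of_nonneg hwt.le]
  have hpower : 3 / (2 * c) * (w t * ⟪v t, w t • g t⟫) ≤
      3 / (2 * c) * (w t * (‖v t‖ * (w t * ‖g t‖))) := by
    gcongr
    exact hnorm ▸ real_inner_le_norm _ _
  have hforce : ⟪x t - p, w t • g t⟫ ≤ ‖x t - p‖ * (w t * ‖g t‖) :=
    hnorm ▸ real_inner_le_norm _ _
  have hcurv : -w'' t * (‖x t - p‖ ^ 2 / 2) ≤ |w'' t| * ‖x t - p‖ ^ 2 := by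
    gcongr
    · exact neg_le_abs _
    · exact half_le_self (by positivity)
  have hconv : w t * (Φ (x t) - Φ p) ≤ w t * ⟪Φ' (x t), x t - p⟫ := by
    gcongr
    exact hstar _
  have hslope : 3 * w' t / c ≤ 3 * θ / c := by gcongr
  have hgrowth : 3 * w' t / c * (w t * (Φ (x t) - Φ p)) ≤
      3 * θ / c * (w t * (Φ (x t) - Φ p)) :=
    mul_le_mul_of_nonneg_right hslope (mul_nonneg hwt.le (sub_nonneg.2 (hmin _)))
  have hfriction : 0 ≤ (1 - 3 * w' t / c) * (w t * ‖v t‖ ^ 2 / 2) := by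
    have : 3 * θ / c < 1 := by rw [div_lt_one hc]; linarith
    exact mul_nonneg (by linarith) (by positivity)
  linarith

lemma exists_deriv_lyapunov_le (hx : IsHeavyBallSolution (fun t ↦ c / w t) Φ' g a x v)
    (hw : IsSlopeBoundedWeight L a w w' w'') (hΦ : ∀ u, HasFDerivAt Φ (innerSL ℝ (Φ' u)) u)
    (hc : 0 < c) (hθ : θ < c / 3) (hmin : ∀ u, Φ p ≤ Φ u)
    (hstar : ∀ u, Φ u - Φ p ≤ ⟪Φ' u, u - p⟫) :
    ∃ M, ∀ t ∈ Ici a, w' t ≤ θ → deriv (lyapunov c w w' Φ p x v) t ≤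
      M * (w t * ‖g t‖ + |w'' t|) * (1 + lyapunov c w w' Φ p x v t)
        - (1 - 3 * θ / c) * (w t * (Φ (x t) - Φ p)) := by
  obtain ⟨K, hK, hcoercive⟩ :=
    exists_pos_sq_add_sq_le_mul_lyapunov (w := w) (w' := w') (x := x) (v := v) hc hθ hmin
  refine ⟨(3 / (2 * c) + 1) * (1 + K), fun t ht hw' ↦
    (hx.deriv_lyapunov_le hw hΦ hc hθ hmin hstar ht hw').trans (sub_le_sub_right ?_ _)⟩
  have hwt := hw.pos t ht
  set F := lyapunov c w w' Φ p x v t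
  have hKF := hcoercive t hwt.le hw'
  have hF : 0 ≤ F := lyapunov_nonneg hc hwt.le (hw'.trans hθ.le) (hmin _)
  have hspeed : w t * ‖v t‖ ≤ (1 + K) * (1 + F) := by
    linarith [sq_nonneg (w t * ‖v t‖ - 1), sq_nonneg ‖x t - p‖, sq_nonneg (w t * ‖v t‖)]
  have hdist : ‖x t - p‖ ≤ (1 + K) * (1 + F) := by
    linarith [sq_nonneg (‖x t - p‖ - 1), sq_nonneg (w t * ‖v t‖), sq_nonneg ‖x t - p‖]
  have hdist_sq : ‖x t - p‖ ^ 2 ≤ (1 + K) * (1 + F) := by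
    linarith [sq_nonneg (w t * ‖v t‖)]
  calc (3 / (2 * c) * (w t * ‖v t‖) + ‖x t - p‖) * (w t * ‖g t‖) + |w'' t| * ‖x t - p‖ ^ 2
    _ ≤ (3 / (2 * c) * ((1 + K) * (1 + F)) + (1 + K) * (1 + F)) * (w t * ‖g t‖)
        + |w'' t| * ((1 + K) * (1 + F)) := by gcongr
    _ = (3 / (2 * c) + 1) * ((1 + K) * (1 + F)) * (w t * ‖g t‖)
        + 1 * ((1 + K) * (1 + F)) * |w'' t| := by ring
    _ ≤ (3 / (2 * c) + 1) * ((1 + K) * (1 + F)) * (w t * ‖g t‖)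
        + (3 / (2 * c) + 1) * ((1 + K) * (1 + F)) * |w'' t| := by
      gcongr
      exact le_add_of_nonneg_left (by positivity)
    _ = (3 / (2 * c) + 1) * (1 + K) * (w t * ‖g t‖ + |w'' t|) * (1 + F) := by ring

lemma locallyIntegrableOn_mul_potential (hx : IsHeavyBallSolution γ Φ' g a x v)
    (hw : ContinuousOn w (Ici a)) (hΦ : Continuous Φ) :
    LocallyIntegrableOn (fun t ↦ w t * (Φ (x t) - Φ p)) (Ici a) :=
  (hw.mul ((hΦ.comp_continuousOn hx.continuousOn_position).sub
    continuousOn_const)).locallyIntegrableOn measurableSet_Ici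

end IsHeavyBallSolution

theorem heavy_ball_potential_integrable_general (hc : 0 < c)
    (hw : IsSlopeBoundedWeight (c / 3) a w w' w'')
    (hΦ : ∀ u, HasFDerivAt Φ (innerSL ℝ (Φ' u)) u) (hmin : ∀ u, Φ p ≤ Φ u)
    (hstar : ∀ u, Φ u - Φ p ≤ ⟪Φ' u, u - p⟫)
    (hx : IsHeavyBallSolution (fun t ↦ c / w t) Φ' g a x v)
    (hg : IntegrableOn (fun t ↦ w t * ‖g t‖) (Ici a)) :
    IntegrableOn (fun t ↦ w t * (Φ (x t) - Φ p)) (Ici a) := by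
  obtain ⟨θ, hθ, hslope⟩ := hw.eventually_deriv_le
  obtain ⟨M, hM⟩ := hx.exists_deriv_lyapunov_le hw hΦ hc hθ hmin hstar
  obtain ⟨T, hT⟩ := eventually_atTop.1 (hslope.and (eventually_ge_atTop a))
  have hTa : Ici T ⊆ Ici a := fun t ht ↦ (hT t ht).2
  have hΦcont : Continuous Φ := continuous_iff_continuousAt.2 fun u ↦ (hΦ u).continuousAt
  have hlocal := hx.locallyIntegrableOn_mul_potential (p := p) hw.continuousOn hΦcont
  have hε : 0 < 1 - 3 * θ / c := by rw [sub_pos, div_lt_one hc]; linarith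
  have htail : IntegrableOn (fun t ↦ (1 - 3 * θ / c) * (w t * (Φ (x t) - Φ p))) (Ici T) := by
    refine integrableOn_Ici_of_hasDerivAt_le_mul_sub
      (f := fun t ↦ 1 + lyapunov c w w' Φ p x v t) (f' := deriv (lyapunov c w w' Φ p x v))
      (m := fun t ↦ M * (w t * ‖g t‖ + |w'' t|))
      (fun t ht ↦ ?hasDerivAt) (fun t ht ↦ ?pos)
      (IntegrableOn.mono_set ((hg.add hw.integrableOn_deriv2.abs).const_mul M) hTa)
      ((hlocal.mono_set hTa).smul (1 - 3 * θ / c)) (fun t ht ↦ ?nonneg)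
      (fun t ht ↦ hM t (hTa ht) (hT t ht).1)
    case hasDerivAt =>
      exact (hx.hasDerivAt_lyapunov hw hΦ hc.ne' (hTa ht)).differentiableAt.hasDerivAt.const_add 1
    case pos =>
      exact add_pos_of_pos_of_nonneg one_pos
        (lyapunov_nonneg hc (hw.pos t (hTa ht)).le ((hT t ht).1.trans hθ.le) (hmin _))
    case nonneg =>
      exact mul_nonneg hε.le (mul_nonneg (hw.pos t (hTa ht)).le (sub_nonneg.2 (hmin _)))
  exact integrableOn_Ici_iff_integrableAtFilter_atTop.2
    ⟨⟨Ici T, Ici_mem_atTop T, (integrable_const_mul_iff hε.ne'.isUnit _).1 htail⟩, hlocal⟩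

end HeavyBall

theorem heavy_ball_potential_integrable
    {H : Type*} [NormedAddCommGroup H] [InnerProductSpace ℝ H] [CompleteSpace H]
    (c α : ℝ) (hc : 0 < c) (hα0 : 0 ≤ α) (hα1 : α < 1)
    (Φ : H → ℝ) (Φ' : H → H) (Φstar : ℝ)
    (hΦconv : ConvexOn ℝ Set.univ Φ)
    (hΦdiff : ∀ u : H, HasGradientAt Φ (Φ' u) u)
    (hΦcont : Continuous Φ')
    (hargmin : {v : H | ∀ u, Φ v ≤ Φ u}.Nonempty)
    (hΦstar : ∀ v ∈ {v : H | ∀ u, Φ v ≤ Φ u}, Φ v = Φstar)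
    (g : ℝ → H) (hg : IntegrableOn g (Ici (0:ℝ)))
    (x x' x'' : ℝ → H)
    (hx1 : ∀ t ∈ Ici (0:ℝ), HasDerivAt x (x' t) t)
    (hx2 : ∀ t ∈ Ici (0:ℝ), HasDerivAt x' (x'' t) t)
    (hode : ∀ t ∈ Ici (0:ℝ),
      x'' t + (c / (1 + t) ^ α) • x' t + Φ' (x t) = g t)
    (hgα : IntegrableOn (fun t => (1 + t) ^ α * ‖g t‖) (Ici (0:ℝ))) :
    IntegrableOn (fun t => (1 + t) ^ α * (Φ (x t) - Φstar)) (Ici (0:ℝ)) := by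
  obtain ⟨p, hp⟩ := hargmin
  exact hΦstar p hp ▸ heavy_ball_potential_integrable_general hc
    (isSlopeBoundedWeight_one_add_rpow (by positivity) hα1) hΦdiff hp
    (fun u ↦ sub_le_apply_sub_of_convexOn_of_hasFDerivAt hΦconv trivial trivial (hΦdiff u))
    (.of_second_order hx1 hx2 hode) hgα
end

section
/- Let x be a solution of the heavy ball equation with vanishing damping and source term g satisfying ∫₀^∞ (1+t)^α ‖g(t)‖ dt < ∞. Then for every x* ∈ argmin Φ, the limit lim_{t→+∞} ‖x(t) − x*‖ exists. -/
open MeasureTheory Filter Real Set RealInnerProductSpace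

open scoped Topology

/-!
Let `w = 1 / γ` be the reciprocal of the damping coefficient, `E` the mechanical energy above the
minimum and `h = ‖x - z‖² / 2` for a minimizer `z`. In the derivative of
`F = 8 w² E + w h' + (1 - w') h` the terms in `h'` cancel, and convexity of `Φ` leaves, as soon as
`w'` is small, `F' ≤ k (1 + F) - w E / 2` with `k` integrable. By Grönwall's inequality `F` is
bounded, so `F` converges. The same estimates show that `8 w² E` increases at most at the rate at
which `F` decreases, up to an integrable error, so `w² E` converges as well. Its limit is `0`:
otherwise `w E` would be at least of the order `1 / w ≥ 1 / t`, whose integral diverges, and `F`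
would tend to `-∞`. Hence `w h' → 0`, and `h = (F - 8 w² E - w h') / (1 - w')` converges.
-/

section Asymptotics

variable {f u : ℝ → ℝ}

lemma exists_antitoneOn_sub_of_deriv_le (hf : ∀ᶠ t in atTop, DifferentiableAt ℝ f t)
    (hu : IntegrableAtFilter u atTop) (hle : ∀ᶠ t in atTop, deriv f t ≤ u t) :
    ∃ (U : ℝ → ℝ) (l T : ℝ), Tendsto U atTop (𝓝 l) ∧ AntitoneOn (fun t => f t - U t) (Ici T) := by
  obtain ⟨T₀, huT₀⟩ := integrableAtFilter_atTop_iff.1 hu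
  obtain ⟨T, hT⟩ := eventually_atTop.1 (hf.and (hle.and (eventually_ge_atTop T₀)))
  have hfT : ∀ t ∈ Ici T, HasDerivAt f (deriv f t) t := fun t ht => (hT t ht).1.hasDerivAt
  have huT : IntegrableOn u (Ici T) := huT₀.mono_set (Ici_subset_Ici.2 (hT T le_rfl).2.2)
  have hu_int : ∀ b ∈ Ici T, IntervalIntegrable u volume T b := fun b hb =>
    (intervalIntegrable_iff_integrableOn_Ioc_of_le hb).2 (huT.mono_set fun _ hy => hy.1.le)
  refine ⟨fun t => ∫ y in T..t, u y, ∫ y in Ioi T, u y, T,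
    intervalIntegral_tendsto_integral_Ioi T (huT.mono_set Ioi_subset_Ici_self) tendsto_id, ?_⟩
  intro a ha b hb hab
  have hincr : f b - f a ≤ ∫ y in a..b, u y :=
    intervalIntegral.sub_le_integral_of_hasDeriv_right_of_le hab
      (fun t ht => (hfT t (ha.trans ht.1)).continuousAt.continuousWithinAt)
      (fun t ht => (hfT t (ha.trans ht.1.le)).hasDerivWithinAt)
      (huT.mono_set fun t ht => ha.trans ht.1) fun t ht => (hT t (ha.trans ht.1.le)).2.1
  have hsplit := intervalIntegral.integral_interval_sub_left (hu_int b hb) (hu_int a ha)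
  dsimp only
  linarith

lemma isBoundedUnder_le_of_deriv_le (hf : ∀ᶠ t in atTop, DifferentiableAt ℝ f t)
    (hu : IntegrableAtFilter u atTop) (hle : ∀ᶠ t in atTop, deriv f t ≤ u t) :
    IsBoundedUnder (· ≤ ·) atTop f := by
  obtain ⟨U, l, T, hU, hanti⟩ := exists_antitoneOn_sub_of_deriv_le hf hu hle
  obtain ⟨M, hM⟩ := hU.isBoundedUnder_le
  refine ⟨f T - U T + M, eventually_map.2 ?_⟩
  filter_upwards [eventually_map.1 hM, eventually_ge_atTop T] with t htM htT
  linarith [hanti self_mem_Ici htT htT]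

lemma exists_tendsto_of_deriv_le (hf : ∀ᶠ t in atTop, DifferentiableAt ℝ f t)
    (hu : IntegrableAtFilter u atTop) (hle : ∀ᶠ t in atTop, deriv f t ≤ u t)
    (hbdd : IsBoundedUnder (· ≥ ·) atTop f) : ∃ l, Tendsto f atTop (𝓝 l) := by
  obtain ⟨U, l, T, hU, hanti⟩ := exists_antitoneOn_sub_of_deriv_le hf hu hle
  rcases tendsto_atTop_of_antitone (antitoneOn_iff_antitone.1 hanti) with hbot | ⟨m, hm⟩
  · have hf_bot : Tendsto f atTop atBot :=
      ((tendsto_comp_val_Ici_atTop.1 hbot).atBot_add hU).congr fun t => sub_add_cancel _ _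
    exact absurd hbdd (not_isBoundedUnder_of_tendsto_atBot hf_bot)
  · exact ⟨m + l, ((tendsto_comp_val_Ici_atTop.1 hm).add hU).congr fun t => sub_add_cancel _ _⟩

lemma isBoundedUnder_le_of_deriv_le_mul (hf : ∀ᶠ t in atTop, DifferentiableAt ℝ f t)
    (hpos : ∀ᶠ t in atTop, 0 < f t) (hu : IntegrableAtFilter u atTop)
    (hle : ∀ᶠ t in atTop, deriv f t ≤ u t * f t) : IsBoundedUnder (· ≤ ·) atTop f := by
  have hlog : IsBoundedUnder (· ≤ ·) atTop fun t => log (f t) := by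
    refine isBoundedUnder_le_of_deriv_le ?_ hu ?_
    · filter_upwards [hf, hpos] with t hft ht using hft.log ht.ne'
    · filter_upwards [hf, hpos, hle] with t hft ht hle_t
      rw [(hft.hasDerivAt.log ht.ne').deriv]
      exact (div_le_iff₀ ht).2 hle_t
  obtain ⟨M, hM⟩ := hlog
  refine ⟨exp M, eventually_map.2 ?_⟩
  filter_upwards [eventually_map.1 hM, hpos] with t htM ht using (log_le_iff_le_exp ht).1 htM

lemma nonpos_of_tendsto_of_deriv_le_sub_div {p : ℝ → ℝ} {L : ℝ}
    (hf : ∀ᶠ t in atTop, DifferentiableAt ℝ f t) (hbdd : IsBoundedUnder (· ≥ ·) atTop f)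
    (hu : IntegrableAtFilter u atTop) (hp : Tendsto p atTop (𝓝 L))
    (hle : ∀ᶠ t in atTop, deriv f t ≤ u t - p t / t) : L ≤ 0 := by
  by_contra! hL
  have hlog : IsBoundedUnder (· ≤ ·) atTop fun t => f t + L / 2 * log t := by
    have hderiv : ∀ᶠ t in atTop,
        HasDerivAt (fun t => f t + L / 2 * log t) (deriv f t + L / 2 * t⁻¹) t := by
      filter_upwards [hf, eventually_gt_atTop 0] with t hft ht using
        hft.hasDerivAt.add ((hasDerivAt_log ht.ne').const_mul _)
    refine isBoundedUnder_le_of_deriv_le (hderiv.mono fun t h => h.differentiableAt) hu ?_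
    filter_upwards [hderiv, hle, hp.eventually_const_lt (half_lt_self hL), eventually_gt_atTop 0]
      with t hd hle_t hpt ht
    have : L / 2 * t⁻¹ ≤ p t / t := by rw [div_eq_mul_inv (p t)]; gcongr
    rw [hd.deriv]
    linarith
  obtain ⟨M, hM⟩ := hlog
  obtain ⟨m, hm⟩ := hbdd
  have hlog_top : Tendsto (fun t => L / 2 * log t) atTop atTop :=
    tendsto_log_atTop.const_mul_atTop (half_pos hL)
  obtain ⟨t, htM, htm, ht⟩ := ((eventually_map.1 hM).and
    ((eventually_map.1 hm).and (hlog_top.eventually_gt_atTop (M - m)))).exists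
  linarith

lemma exists_integrable_ge_of_deriv_le_mul_one_add {F k : ℝ → ℝ}
    (hF : ∀ᶠ t in atTop, DifferentiableAt ℝ F t) (hF0 : ∀ᶠ t in atTop, 0 ≤ F t)
    (hk : IntegrableAtFilter k atTop) (hk0 : ∀ᶠ t in atTop, 0 ≤ k t)
    (hF' : ∀ᶠ t in atTop, deriv F t ≤ k t * (1 + F t)) :
    ∃ u : ℝ → ℝ, IntegrableAtFilter u atTop ∧ ∀ᶠ t in atTop, k t * (1 + F t) ≤ u t := by
  obtain ⟨B, hB⟩ : IsBoundedUnder (· ≤ ·) atTop fun t => 1 + F t := by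
    refine isBoundedUnder_le_of_deriv_le_mul (hF.mono fun t h => h.const_add 1) ?_ hk ?_
    · filter_upwards [hF0] with t h using by positivity
    · filter_upwards [hF'] with t ht using by rwa [deriv_const_add]
  refine ⟨fun t => B * k t, hk.smul B, ?_⟩
  filter_upwards [eventually_map.1 hB, hk0] with t hBt hkt
  rw [mul_comm B]
  gcongr

lemma exists_tendsto_and_tendsto_zero_of_dissipation {F P D : ℝ → ℝ} {C : ℝ} (hC : 0 < C)
    (hF : ∀ᶠ t in atTop, DifferentiableAt ℝ F t) (hP : ∀ᶠ t in atTop, DifferentiableAt ℝ P t)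
    (hF0 : ∀ᶠ t in atTop, 0 ≤ F t) (hP0 : ∀ᶠ t in atTop, 0 ≤ P t)
    (hD0 : ∀ᶠ t in atTop, 0 ≤ D t) (hu : IntegrableAtFilter u atTop)
    (hF' : ∀ᶠ t in atTop, deriv F t ≤ u t - D t) (hP' : ∀ᶠ t in atTop, deriv P t ≤ u t + D t)
    (hPD : ∀ᶠ t in atTop, P t ≤ C * t * D t) :
    (∃ l, Tendsto F atTop (𝓝 l)) ∧ Tendsto P atTop (𝓝 0) := by
  have hF_bdd : IsBoundedUnder (· ≥ ·) atTop F := ⟨0, eventually_map.2 hF0⟩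
  obtain ⟨l, hl⟩ : ∃ l, Tendsto F atTop (𝓝 l) := by
    refine exists_tendsto_of_deriv_le hF hu ?_ hF_bdd
    filter_upwards [hF', hD0] with t hF't hDt using by linarith
  -- `D` cancels in the derivative of `P + F`.
  obtain ⟨m, hm⟩ : ∃ m, Tendsto (fun t => P t + F t) atTop (𝓝 m) := by
    refine exists_tendsto_of_deriv_le (hP.and hF |>.mono fun t h => h.1.add h.2)
      (hu.add hu) ?_ ⟨0, eventually_map.2 ?_⟩
    · filter_upwards [hP, hF, hF', hP'] with t hPt hFt hF't hP't
      rw [deriv_fun_add hPt hFt, Pi.add_apply]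
      linarith
    · filter_upwards [hP0, hF0] with t hPt hFt using add_nonneg hPt hFt
  have hP_lim : Tendsto P atTop (𝓝 (m - l)) :=
    (hm.sub hl).congr fun t => add_sub_cancel_right _ _
  have hlim_nonpos : (m - l) / C ≤ 0 := by
    refine nonpos_of_tendsto_of_deriv_le_sub_div hF hF_bdd hu (hP_lim.div_const C) ?_
    filter_upwards [hF', hPD, eventually_gt_atTop 0] with t hF't hPDt ht
    have : P t / C / t ≤ D t := by
      rw [div_div, div_le_iff₀ (by positivity)]
      linarith
    linarith
  have hlim : m - l = 0 :=
    le_antisymm (by simpa using (div_le_iff₀ hC).1 hlim_nonpos) (ge_of_tendsto hP_lim hP0)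
  exact ⟨⟨l, hl⟩, hlim ▸ hP_lim⟩

lemma exists_tendsto_and_tendsto_zero_of_dissipation_mul_one_add {F P D k : ℝ → ℝ} {C : ℝ}
    (hC : 0 < C) (hF : ∀ᶠ t in atTop, DifferentiableAt ℝ F t)
    (hP : ∀ᶠ t in atTop, DifferentiableAt ℝ P t)
    (hF0 : ∀ᶠ t in atTop, 0 ≤ F t) (hP0 : ∀ᶠ t in atTop, 0 ≤ P t)
    (hD0 : ∀ᶠ t in atTop, 0 ≤ D t)
    (hk : IntegrableAtFilter k atTop) (hk0 : ∀ᶠ t in atTop, 0 ≤ k t)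
    (hF' : ∀ᶠ t in atTop, deriv F t ≤ k t * (1 + F t) - D t)
    (hP' : ∀ᶠ t in atTop, deriv P t ≤ k t * (1 + F t) + D t)
    (hPD : ∀ᶠ t in atTop, P t ≤ C * t * D t) :
    (∃ l, Tendsto F atTop (𝓝 l)) ∧ Tendsto P atTop (𝓝 0) := by
  obtain ⟨u, hu, hku⟩ := exists_integrable_ge_of_deriv_le_mul_one_add hF hF0 hk hk0 <| by
    filter_upwards [hF', hD0] with t hF't hDt using hF't.trans (sub_le_self _ hDt)
  refine exists_tendsto_and_tendsto_zero_of_dissipation hC hF hP hF0 hP0 hD0 hu ?_ ?_ hPD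
  · filter_upwards [hF', hku] with t hF't hkut using by linarith
  · filter_upwards [hP', hku] with t hP't hkut using by linarith

end Asymptotics

namespace HeavyBall

/-- The reciprocal `w = 1 / γ` of an admissible damping coefficient `γ`, with first and second
derivatives `w'` and `w''`: eventually positive, of vanishing slope, and with integrable second
derivative. For `γ t = c / (1 + t) ^ α` this is `w t = (1 + t) ^ α / c`. All conditions concern
large times only. -/
structure IsSublinearWeight (w w' w'' : ℝ → ℝ) : Prop where
  eventually_pos : ∀ᶠ t in atTop, 0 < w t
  eventually_hasDerivAt : ∀ᶠ t in atTop, HasDerivAt w (w' t) t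
  eventually_hasDerivAt_deriv : ∀ᶠ t in atTop, HasDerivAt w' (w'' t) t
  tendsto_deriv : Tendsto w' atTop (𝓝 0)
  integrable_deriv_deriv : IntegrableAtFilter w'' atTop

namespace IsSublinearWeight

lemma eventually_le_self {w w' w'' : ℝ → ℝ} (hw : IsSublinearWeight w w' w'') :
    ∀ᶠ t in atTop, w t ≤ t := by
  have hderiv : ∀ᶠ t in atTop, HasDerivAt (fun t => w t - t / 2) (w' t - 1 / 2) t := by
    filter_upwards [hw.eventually_hasDerivAt] with t ht using ht.sub ((hasDerivAt_id t).div_const 2)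
  obtain ⟨b, hb⟩ : IsBoundedUnder (· ≤ ·) atTop fun t => w t - t / 2 := by
    refine isBoundedUnder_le_of_deriv_le (hderiv.mono fun t h => h.differentiableAt)
      integrableAtFilter_zero ?_
    filter_upwards [hderiv, hw.tendsto_deriv.eventually_le_const one_half_pos] with t hd ht
    rw [hd.deriv]
    exact sub_nonpos.2 ht
  filter_upwards [eventually_map.1 hb, eventually_ge_atTop (2 * b)] with t htb ht
  linarith

lemma rpow_div_const {α : ℝ} (hα : α < 1) {c : ℝ} (hc : 0 < c) :
    IsSublinearWeight (fun t => (1 + t) ^ α / c) (fun t => α * (1 + t) ^ (α - 1) / c)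
      (fun t => α * ((α - 1) * (1 + t) ^ (α - 1 - 1)) / c) := by
  have hpos : ∀ᶠ t : ℝ in atTop, 0 < 1 + t := by
    filter_upwards [eventually_gt_atTop 0] with t ht using by positivity
  have hderiv (β : ℝ) : ∀ᶠ t in atTop,
      HasDerivAt (fun t : ℝ => (1 + t) ^ β) (β * (1 + t) ^ (β - 1)) t := by
    filter_upwards [hpos] with t ht
    simpa using ((hasDerivAt_id t).const_add 1).rpow_const (p := β) (Or.inl ht.ne')
  refine ⟨?_, ?_, ?_, ?_, ?_⟩
  · filter_upwards [hpos] with t ht using by positivity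
  · filter_upwards [hderiv α] with t ht using ht.div_const c
  · filter_upwards [hderiv (α - 1)] with t ht using (ht.const_mul α).div_const c
  · have hlim : Tendsto (fun t : ℝ => (1 + t) ^ (α - 1)) atTop (𝓝 0) := by
      simpa [Function.comp_def] using (tendsto_rpow_neg_atTop (sub_pos.2 hα)).comp
        (tendsto_atTop_add_const_left atTop 1 tendsto_id)
    simpa using (hlim.const_mul α).div_const c
  · have hint : IntegrableOn (fun t : ℝ => (1 + t) ^ (α - 1 - 1)) (Ioi 0) := by
      simpa only [add_comm] using integrableOn_add_rpow_Ioi_of_lt (a := α - 1 - 1) (c := 0) (m := 1)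
        (by linarith) (by norm_num)
    exact ⟨Ioi 0, Ioi_mem_atTop 0, ((hint.const_mul (α - 1)).const_mul α).div_const c⟩

end IsSublinearWeight

section Energy

variable {H : Type*} [NormedAddCommGroup H]

/-- The mechanical energy at position `q` and velocity `v`, normalized to vanish at rest at the
reference point `z`. -/
noncomputable def energy (Φ : H → ℝ) (z q v : H) : ℝ :=
  ‖v‖ ^ 2 / 2 + (Φ q - Φ z)

/-- The energy scaled by `8 w²`, where `w` is the value of the weight. The factor `8` makes this
quantity dominate the cross term of `lyapunov`. -/
noncomputable def weightedEnergy (Φ : H → ℝ) (z : H) (w : ℝ) (q v : H) : ℝ :=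
  8 * (w ^ 2 * energy Φ z q v)

variable {Φ : H → ℝ} {z : H}

lemma norm_sq_div_two_le_energy (hz : ∀ u, Φ z ≤ Φ u) (q v : H) :
    ‖v‖ ^ 2 / 2 ≤ energy Φ z q v :=
  le_add_of_nonneg_right (sub_nonneg.2 (hz q))

lemma energy_nonneg (hz : ∀ u, Φ z ≤ Φ u) (q v : H) : 0 ≤ energy Φ z q v :=
  le_trans (by positivity) (norm_sq_div_two_le_energy hz q v)

lemma sq_le_weightedEnergy (hz : ∀ u, Φ z ≤ Φ u) (w : ℝ) (q v : H) :
    4 * (w * ‖v‖) ^ 2 ≤ weightedEnergy Φ z w q v := by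
  have := mul_le_mul_of_nonneg_left (norm_sq_div_two_le_energy hz q v) (sq_nonneg w)
  rw [weightedEnergy]
  linarith

lemma weightedEnergy_nonneg (hz : ∀ u, Φ z ≤ Φ u) (w : ℝ) (q v : H) :
    0 ≤ weightedEnergy Φ z w q v :=
  le_trans (by positivity) (sq_le_weightedEnergy hz w q v)

end Energy

section Lyapunov

variable {H : Type*} [NormedAddCommGroup H] [InnerProductSpace ℝ H]

/-- The Lyapunov function `8 w² E + w h' + (1 - w') h`, where `h = ‖q - z‖² / 2` is differentiated
along the motion and `w`, `w'` are the values of the weight and of its derivative. -/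
noncomputable def lyapunov (Φ : H → ℝ) (z : H) (w w' : ℝ) (q v : H) : ℝ :=
  weightedEnergy Φ z w q v + w * ⟪q - z, v⟫ + (1 - w') * (‖q - z‖ ^ 2 / 2)

variable {Φ : H → ℝ} {z : H} {w w' : ℝ}

lemma sq_add_sq_le_lyapunov (hz : ∀ u, Φ z ≤ Φ u) (hw : 0 ≤ w) (hw' : w' ≤ 1 / 2) (q v : H) :
    2 * (w * ‖v‖) ^ 2 + ‖q - z‖ ^ 2 / 8 ≤ lyapunov Φ z w w' q v := by
  have hcross : -(w * (‖q - z‖ * ‖v‖)) ≤ w * ⟪q - z, v⟫ := by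
    rw [← mul_neg]
    exact mul_le_mul_of_nonneg_left (neg_le_of_abs_le (abs_real_inner_le_norm _ _)) hw
  have hdist : 1 / 2 * (‖q - z‖ ^ 2 / 2) ≤ (1 - w') * (‖q - z‖ ^ 2 / 2) := by
    gcongr
    linarith
  rw [lyapunov]
  linarith [sq_le_weightedEnergy hz w q v, sq_nonneg (4 * (w * ‖v‖) - ‖q - z‖)]

lemma lyapunov_nonneg (hz : ∀ u, Φ z ≤ Φ u) (hw : 0 ≤ w) (hw' : w' ≤ 1 / 2) (q v : H) :
    0 ≤ lyapunov Φ z w w' q v :=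
  le_trans (by positivity) (sq_add_sq_le_lyapunov hz hw hw' q v)

lemma norm_sub_sq_le_lyapunov (hz : ∀ u, Φ z ≤ Φ u) (hw : 0 ≤ w) (hw' : w' ≤ 1 / 2) (q v : H) :
    ‖q - z‖ ^ 2 ≤ 8 * lyapunov Φ z w w' q v := by
  linarith [sq_add_sq_le_lyapunov hz hw hw' q v, sq_nonneg (w * ‖v‖)]

lemma norm_add_norm_le_lyapunov (hz : ∀ u, Φ z ≤ Φ u) (hw : 0 ≤ w) (hw' : w' ≤ 1 / 2) (q v : H) :
    8 * (w * ‖v‖) + ‖q - z‖ ≤ 5 * (1 + lyapunov Φ z w w' q v) := by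
  linarith [sq_add_sq_le_lyapunov hz hw hw' q v, lyapunov_nonneg hz hw hw' q v, sq_nonneg (w * ‖v‖),
    sq_nonneg (w * ‖v‖ - 1), sq_nonneg (‖q - z‖ - 1)]

end Lyapunov

section Dissipation

variable {H : Type*} [NormedAddCommGroup H] [InnerProductSpace ℝ H]
  {Φ : H → ℝ} {z q v p f : H} {w w₁ w₂ : ℝ}

lemma weightedEnergy_rate_le (hz : ∀ u, Φ z ≤ Φ u) (hw : 0 ≤ w) (hw₁ : w₁ ≤ 1 / 32) :
    8 * (2 * w * w₁ * energy Φ z q v + w ^ 2 * ⟪v, f⟫ - w * ‖v‖ ^ 2) ≤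
      w * energy Φ z q v / 2 + w * ‖f‖ * (8 * (w * ‖v‖)) - 8 * (w * ‖v‖ ^ 2) := by
  have hslope : w₁ * (w * energy Φ z q v) ≤ 1 / 32 * (w * energy Φ z q v) :=
    mul_le_mul_of_nonneg_right hw₁ (mul_nonneg hw (energy_nonneg hz q v))
  have hsource : w ^ 2 * ⟪v, f⟫ ≤ w ^ 2 * (‖v‖ * ‖f‖) := by
    gcongr
    exact real_inner_le_norm v f
  linarith

lemma weightedEnergy_rate_le_lyapunov (hz : ∀ u, Φ z ≤ Φ u) (hw : 0 ≤ w) (hw₁ : w₁ ≤ 1 / 32) :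
    8 * (2 * w * w₁ * energy Φ z q v + w ^ 2 * ⟪v, f⟫ - w * ‖v‖ ^ 2) ≤
      5 * (w * ‖f‖ + |w₂|) * (1 + lyapunov Φ z w w₁ q v) + w * energy Φ z q v / 2 := by
  have hw₁' : w₁ ≤ 1 / 2 := hw₁.trans (by norm_num)
  have hspeed : 8 * (w * ‖v‖) ≤ 5 * (1 + lyapunov Φ z w w₁ q v) := by
    linarith [norm_add_norm_le_lyapunov hz hw hw₁' q v, norm_nonneg (q - z)]
  have hsource := mul_le_mul_of_nonneg_left hspeed (mul_nonneg hw (norm_nonneg f))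
  have hcurv : 0 ≤ |w₂| * (1 + lyapunov Φ z w w₁ q v) :=
    mul_nonneg (abs_nonneg w₂) (by linarith [lyapunov_nonneg hz hw hw₁' q v])
  have hkinetic : 0 ≤ w * ‖v‖ ^ 2 := by positivity
  linarith [weightedEnergy_rate_le (q := q) (v := v) (f := f) hz hw hw₁]

lemma lyapunov_rate_le (hz : ∀ u, Φ z ≤ Φ u) (hw : 0 ≤ w) (hw₁ : w₁ ≤ 1 / 32)
    (hp : Φ q - Φ z ≤ ⟪q - z, p⟫) :
    8 * (2 * w * w₁ * energy Φ z q v + w ^ 2 * ⟪v, f⟫ - w * ‖v‖ ^ 2) + w * ⟪q - z, f - p⟫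
        + w * ‖v‖ ^ 2 - w₂ * (‖q - z‖ ^ 2 / 2) ≤
      5 * (w * ‖f‖ + |w₂|) * (1 + lyapunov Φ z w w₁ q v) - w * energy Φ z q v / 2 := by
  have hw₁' : w₁ ≤ 1 / 2 := hw₁.trans (by norm_num)
  have hrate := weightedEnergy_rate_le (q := q) (v := v) (f := f) hz hw hw₁
  have hforce : w * ⟪q - z, f - p⟫ ≤ w * (‖q - z‖ * ‖f‖ - (Φ q - Φ z)) := by
    rw [inner_sub_right]
    gcongr
    exact real_inner_le_norm _ _
  have hcurv : -w₂ * (‖q - z‖ ^ 2 / 2) ≤ |w₂| * (5 * (1 + lyapunov Φ z w w₁ q v)) := by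
    gcongr
    · exact neg_le_abs w₂
    · linarith [norm_sub_sq_le_lyapunov hz hw hw₁' q v, lyapunov_nonneg hz hw hw₁' q v]
  have hsource := mul_le_mul_of_nonneg_left (norm_add_norm_le_lyapunov hz hw hw₁' q v)
    (mul_nonneg hw (norm_nonneg f))
  have hkinetic : 0 ≤ w * ‖v‖ ^ 2 := by positivity
  have henergy : w * energy Φ z q v = w * ‖v‖ ^ 2 / 2 + w * (Φ q - Φ z) := by
    rw [energy]
    ring
  linarith

end Dissipation

section Motion

variable {H : Type*} [NormedAddCommGroup H] [InnerProductSpace ℝ H] [CompleteSpace H]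

lemma sub_le_inner_of_convexOn_of_hasGradientAt {Φ : H → ℝ} {p q : H}
    (hΦ : ConvexOn ℝ univ Φ) (hp : HasGradientAt Φ p q) (z : H) : Φ q - Φ z ≤ ⟪q - z, p⟫ := by
  have hconv : ConvexOn ℝ univ (Φ ∘ AffineMap.lineMap (k := ℝ) q z) := by
    simpa only [preimage_univ] using hΦ.comp_affineMap (AffineMap.lineMap (k := ℝ) q z)
  have hderiv : HasDerivAt (Φ ∘ AffineMap.lineMap (k := ℝ) q z) ⟪p, z - q⟫ 0 := by
    have hp₀ : HasFDerivAt Φ (InnerProductSpace.toDual ℝ H p) (AffineMap.lineMap q z (0 : ℝ)) := by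
      simpa using hp.hasFDerivAt
    simpa using hp₀.comp_hasDerivAt (0 : ℝ) AffineMap.hasDerivAt_lineMap
  have hslope := hconv.le_slope_of_hasDerivAt (mem_univ 0) (mem_univ 1) zero_lt_one hderiv
  simp only [slope_def_field, Function.comp_apply, AffineMap.lineMap_apply_one,
    AffineMap.lineMap_apply_zero, sub_zero, div_one] at hslope
  rw [real_inner_comm, ← neg_sub z q, inner_neg_right]
  linarith

variable {Φ : H → ℝ} {z p a f : H} {x v : ℝ → H} {w w' : ℝ → ℝ} {w₁ w₂ t : ℝ}

lemma hasDerivAt_energy (hΦ : HasGradientAt Φ p (x t)) (hx : HasDerivAt x (v t) t)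
    (hv : HasDerivAt v a t) (hode : a + (w t)⁻¹ • v t + p = f) :
    HasDerivAt (fun s => energy Φ z (x s) (v s)) (⟪v t, f⟫ - (w t)⁻¹ * ‖v t‖ ^ 2) t := by
  have hpot : HasDerivAt (fun s => Φ (x s)) ⟪p, v t⟫ t := by
    simpa [Function.comp_def] using hΦ.hasFDerivAt.comp_hasDerivAt t hx
  refine ((hv.norm_sq.div_const 2).add (hpot.sub_const (Φ z))).congr_deriv ?_
  rw [← hode, inner_add_right, inner_add_right, real_inner_smul_right, real_inner_self_eq_norm_sq,
    real_inner_comm p]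
  ring

lemma hasDerivAt_weightedEnergy (hw0 : w t ≠ 0) (hw : HasDerivAt w w₁ t)
    (hΦ : HasGradientAt Φ p (x t)) (hx : HasDerivAt x (v t) t) (hv : HasDerivAt v a t)
    (hode : a + (w t)⁻¹ • v t + p = f) :
    HasDerivAt (fun s => weightedEnergy Φ z (w s) (x s) (v s))
      (8 * (2 * w t * w₁ * energy Φ z (x t) (v t) + w t ^ 2 * ⟪v t, f⟫ - w t * ‖v t‖ ^ 2)) t := by
  refine (((hw.pow 2).mul (hasDerivAt_energy hΦ hx hv hode)).const_mul 8).congr_deriv ?_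
  simp only [Pi.pow_apply]
  field_simp
  ring

-- The weight `1 - w'` of `‖x - z‖² / 2` is the one for which the terms in `⟪x - z, v⟫` cancel.
lemma hasDerivAt_lyapunov (hw0 : w t ≠ 0) (hw : HasDerivAt w (w' t) t)
    (hw' : HasDerivAt w' w₂ t) (hΦ : HasGradientAt Φ p (x t)) (hx : HasDerivAt x (v t) t)
    (hv : HasDerivAt v a t) (hode : a + (w t)⁻¹ • v t + p = f) :
    HasDerivAt (fun s => lyapunov Φ z (w s) (w' s) (x s) (v s))
      (8 * (2 * w t * w' t * energy Φ z (x t) (v t) + w t ^ 2 * ⟪v t, f⟫ - w t * ‖v t‖ ^ 2)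
        + w t * ⟪x t - z, f - p⟫ + w t * ‖v t‖ ^ 2 - w₂ * (‖x t - z‖ ^ 2 / 2)) t := by
  have hdist := hx.sub_const z
  refine (((hasDerivAt_weightedEnergy hw0 hw hΦ hx hv hode).add (hw.mul (hdist.inner ℝ hv))).add
    ((hw'.const_sub 1).mul (hdist.norm_sq.div_const 2))).congr_deriv ?_
  have hacc : w t * ⟪x t - z, f - p⟫ = w t * ⟪x t - z, a⟫ + ⟪x t - z, v t⟫ := by
    rw [← hode, add_sub_cancel_right, inner_add_right, real_inner_smul_right]
    field_simp
  rw [hacc, real_inner_self_eq_norm_sq]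
  ring

end Motion

section Convergence

variable {H : Type*} [NormedAddCommGroup H] [InnerProductSpace ℝ H] {Φ : H → ℝ} {z : H}
  {w w' w'' : ℝ → ℝ}

lemma tendsto_weight_mul_inner_zero {x v : ℝ → H} {l : ℝ} (hz : ∀ u, Φ z ≤ Φ u)
    (hw : ∀ᶠ t in atTop, 0 < w t) (hw' : Tendsto w' atTop (𝓝 0))
    (hF : Tendsto (fun t => lyapunov Φ z (w t) (w' t) (x t) (v t)) atTop (𝓝 l))
    (hP : Tendsto (fun t => weightedEnergy Φ z (w t) (x t) (v t)) atTop (𝓝 0)) :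
    Tendsto (fun t => w t * ⟪x t - z, v t⟫) atTop (𝓝 0) := by
  have hbound : Tendsto (fun t => √(2 * (weightedEnergy Φ z (w t) (x t) (v t) *
      lyapunov Φ z (w t) (w' t) (x t) (v t)))) atTop (𝓝 0) := by
    simpa using ((hP.mul hF).const_mul 2).sqrt
  refine squeeze_zero_norm' ?_ hbound
  filter_upwards [hw, hw'.eventually_le_const one_half_pos] with t hwt hw't
  have hcross : ‖w t * ⟪x t - z, v t⟫‖ ≤ w t * ‖v t‖ * ‖x t - z‖ := by
    rw [norm_mul, norm_of_nonneg hwt.le, mul_assoc, mul_comm ‖v t‖]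
    gcongr
    exact norm_inner_le_norm _ _
  refine hcross.trans (le_sqrt_of_sq_le ?_)
  have hspeed : (w t * ‖v t‖) ^ 2 ≤ weightedEnergy Φ z (w t) (x t) (v t) / 4 := by
    linarith [sq_le_weightedEnergy hz (w t) (x t) (v t)]
  calc (w t * ‖v t‖ * ‖x t - z‖) ^ 2 = (w t * ‖v t‖) ^ 2 * ‖x t - z‖ ^ 2 := mul_pow _ _ _
    _ ≤ weightedEnergy Φ z (w t) (x t) (v t) / 4 *
        (8 * lyapunov Φ z (w t) (w' t) (x t) (v t)) :=
      mul_le_mul hspeed (norm_sub_sq_le_lyapunov hz hwt.le hw't _ _) (sq_nonneg _)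
        ((sq_nonneg _).trans hspeed)
    _ = _ := by ring

lemma tendsto_norm_sub_of_tendsto_lyapunov {x v : ℝ → H} {l : ℝ} (hz : ∀ u, Φ z ≤ Φ u)
    (hw : ∀ᶠ t in atTop, 0 < w t) (hw' : Tendsto w' atTop (𝓝 0))
    (hF : Tendsto (fun t => lyapunov Φ z (w t) (w' t) (x t) (v t)) atTop (𝓝 l))
    (hP : Tendsto (fun t => weightedEnergy Φ z (w t) (x t) (v t)) atTop (𝓝 0)) :
    Tendsto (fun t => ‖x t - z‖) atTop (𝓝 √(2 * l)) := by
  have hdist : Tendsto (fun t => (1 - w' t) * (‖x t - z‖ ^ 2 / 2)) atTop (𝓝 l) := by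
    have h := (hF.sub hP).sub (tendsto_weight_mul_inner_zero hz hw hw' hF hP)
    simp only [sub_zero] at h
    exact h.congr fun t => by rw [lyapunov]; ring
  have hcoeff : Tendsto (fun t => 1 - w' t) atTop (𝓝 1) := by simpa using hw'.const_sub 1
  have hsq : Tendsto (fun t => ‖x t - z‖ ^ 2) atTop (𝓝 (2 * l)) := by
    have h := (hdist.div hcoeff one_ne_zero).const_mul 2
    rw [div_one] at h
    refine h.congr' ?_
    filter_upwards [hcoeff.eventually_ne one_ne_zero] with t ht
    simp only [Pi.div_apply]
    field_simp
  simpa only [sqrt_sq (norm_nonneg _)] using hsq.sqrt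

variable [CompleteSpace H] {Φ' : H → H} {g x x' x'' : ℝ → H}

lemma exists_tendsto_lyapunov_and_tendsto_weightedEnergy (hΦconv : ConvexOn ℝ univ Φ)
    (hΦdiff : ∀ u, HasGradientAt Φ (Φ' u) u) (hz : ∀ u, Φ z ≤ Φ u)
    (hw : IsSublinearWeight w w' w'')
    (hx : ∀ᶠ t in atTop, HasDerivAt x (x' t) t) (hx' : ∀ᶠ t in atTop, HasDerivAt x' (x'' t) t)
    (hode : ∀ᶠ t in atTop, x'' t + (w t)⁻¹ • x' t + Φ' (x t) = g t)
    (hg : IntegrableAtFilter (fun t => w t * ‖g t‖) atTop) :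
    (∃ l, Tendsto (fun t => lyapunov Φ z (w t) (w' t) (x t) (x' t)) atTop (𝓝 l)) ∧
      Tendsto (fun t => weightedEnergy Φ z (w t) (x t) (x' t)) atTop (𝓝 0) := by
  set F := fun t => lyapunov Φ z (w t) (w' t) (x t) (x' t)
  set P := fun t => weightedEnergy Φ z (w t) (x t) (x' t)
  set D := fun t => w t * energy Φ z (x t) (x' t) / 2
  set k := fun t => 5 * (w t * ‖g t‖ + |w'' t|)
  have hslope : ∀ᶠ t in atTop, w' t ≤ 1 / 32 := hw.tendsto_deriv.eventually_le_const (by norm_num)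
  have hF : ∀ᶠ t in atTop, DifferentiableAt ℝ F t ∧ deriv F t ≤ k t * (1 + F t) - D t := by
    filter_upwards [hw.eventually_pos, hw.eventually_hasDerivAt, hw.eventually_hasDerivAt_deriv,
      hslope, hx, hx', hode] with t hwt hdw hdw' hslope_t hxt hx't hode_t
    have h := hasDerivAt_lyapunov (z := z) hwt.ne' hdw hdw' (hΦdiff (x t)) hxt hx't hode_t
    have hconv := sub_le_inner_of_convexOn_of_hasGradientAt hΦconv (hΦdiff (x t)) z
    exact ⟨h.differentiableAt, h.deriv.trans_le (lyapunov_rate_le hz hwt.le hslope_t hconv)⟩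
  have hP : ∀ᶠ t in atTop, DifferentiableAt ℝ P t ∧ deriv P t ≤ k t * (1 + F t) + D t := by
    filter_upwards [hw.eventually_pos, hw.eventually_hasDerivAt, hslope, hx, hx', hode]
      with t hwt hdw hslope_t hxt hx't hode_t
    have h := hasDerivAt_weightedEnergy (z := z) hwt.ne' hdw (hΦdiff (x t)) hxt hx't hode_t
    exact ⟨h.differentiableAt,
      h.deriv.trans_le (weightedEnergy_rate_le_lyapunov hz hwt.le hslope_t)⟩
  have hF0 : ∀ᶠ t in atTop, 0 ≤ F t := by
    filter_upwards [hw.eventually_pos, hslope] with t hwt hslope_t using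
      lyapunov_nonneg hz hwt.le (hslope_t.trans (by norm_num)) _ _
  have hD0 : ∀ᶠ t in atTop, 0 ≤ D t := by
    filter_upwards [hw.eventually_pos] with t hwt using
      div_nonneg (mul_nonneg hwt.le (energy_nonneg hz _ _)) zero_le_two
  have hk : IntegrableAtFilter k atTop :=
    (hg.add hw.integrable_deriv_deriv.norm).smul (5 : ℝ)
  refine exists_tendsto_and_tendsto_zero_of_dissipation_mul_one_add (C := 16) (by norm_num)
    (hF.mono fun _ h => h.1) (hP.mono fun _ h => h.1) hF0
    (.of_forall fun _ => weightedEnergy_nonneg hz _ _ _) hD0 hk ?_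
    (hF.mono fun _ h => h.2) (hP.mono fun _ h => h.2) ?_
  · filter_upwards [hw.eventually_pos] with t hwt using by positivity
  · filter_upwards [hw.eventually_le_self, hD0] with t hwt hDt
    calc P t = 16 * w t * D t := by simp only [P, D, weightedEnergy]; ring
      _ ≤ 16 * t * D t := by gcongr

end Convergence

end HeavyBall

open HeavyBall in
theorem heavy_ball_distance_limit_exists_general
    {H : Type*} [NormedAddCommGroup H] [InnerProductSpace ℝ H] [CompleteSpace H]
    {Φ : H → ℝ} {Φ' : H → H} (hΦconv : ConvexOn ℝ univ Φ)
    (hΦdiff : ∀ u, HasGradientAt Φ (Φ' u) u)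
    {w w' w'' : ℝ → ℝ} (hw : IsSublinearWeight w w' w'') {g x x' x'' : ℝ → H}
    (hx : ∀ᶠ t in atTop, HasDerivAt x (x' t) t) (hx' : ∀ᶠ t in atTop, HasDerivAt x' (x'' t) t)
    (hode : ∀ᶠ t in atTop, x'' t + (w t)⁻¹ • x' t + Φ' (x t) = g t)
    (hg : IntegrableAtFilter (fun t => w t * ‖g t‖) atTop) {z : H} (hz : ∀ u, Φ z ≤ Φ u) :
    ∃ l : ℝ, Tendsto (fun t => ‖x t - z‖) atTop (𝓝 l) := by
  obtain ⟨⟨l, hF⟩, hP⟩ :=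
    exists_tendsto_lyapunov_and_tendsto_weightedEnergy hΦconv hΦdiff hz hw hx hx' hode hg
  exact ⟨_, tendsto_norm_sub_of_tendsto_lyapunov hz hw.eventually_pos hw.tendsto_deriv hF hP⟩

theorem heavy_ball_distance_limit_exists
    {H : Type*} [NormedAddCommGroup H] [InnerProductSpace ℝ H] [CompleteSpace H]
    (c α : ℝ) (hc : 0 < c) (hα0 : 0 ≤ α) (hα1 : α < 1)
    (Φ : H → ℝ) (Φ' : H → H) (Φstar : ℝ)
    (hΦconv : ConvexOn ℝ Set.univ Φ)
    (hΦdiff : ∀ u : H, HasGradientAt Φ (Φ' u) u)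
    (hΦcont : Continuous Φ')
    (hargmin : {v : H | ∀ u, Φ v ≤ Φ u}.Nonempty)
    (hΦstar : ∀ v ∈ {v : H | ∀ u, Φ v ≤ Φ u}, Φ v = Φstar)
    (g : ℝ → H) (hg : IntegrableOn g (Ici (0:ℝ)))
    (x x' x'' : ℝ → H)
    (hx1 : ∀ t ∈ Ici (0:ℝ), HasDerivAt x (x' t) t)
    (hx2 : ∀ t ∈ Ici (0:ℝ), HasDerivAt x' (x'' t) t)
    (hode : ∀ t ∈ Ici (0:ℝ),
      x'' t + (c / (1 + t) ^ α) • x' t + Φ' (x t) = g t)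
    (hgα : IntegrableOn (fun t => (1 + t) ^ α * ‖g t‖) (Ici (0:ℝ))) :
    ∀ xstar ∈ {v : H | ∀ u, Φ v ≤ Φ u},
      ∃ l : ℝ, Tendsto (fun t => ‖x t - xstar‖) atTop (nhds l) := by
  intro z hz
  exact heavy_ball_distance_limit_exists_general hΦconv hΦdiff (.rpow_div_const hα1 hc)
    (eventually_atTop.2 ⟨0, hx1⟩) (eventually_atTop.2 ⟨0, hx2⟩)
    (eventually_atTop.2 ⟨0, by simpa only [inv_div, mem_Ici] using hode⟩)
    ⟨Ici 0, Ici_mem_atTop 0,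
      by simpa only [div_mul_eq_mul_div, IntegrableOn] using hgα.div_const c⟩ hz
end

section
/- Let x be a solution of the heavy ball equation with vanishing damping and source term g satisfying ∫₀^∞ (1+t)^α ‖g(t)‖ dt < ∞, and suppose the interior of argmin Φ is nonempty. Then ∫₀^∞ (1/γ(t)) ‖∇Φ(x(t))‖ dt < ∞. -/
open MeasureTheory Filter Real Set RealInnerProductSpace

/-!
Write `τ = 1 / γ`, let `z` be interior to the set of minimizers, and put
`E = τ² (Φ(x) - Φ(z)) + ½ ‖τ x' + ⅔ (x - z)‖² + ⅓ (⅓ - τ') ‖x - z‖²`.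
Along the trajectory the cross terms cancel and
`E' = τ ⟪g, τ x' + ⅔ (x - z)⟫ - τ (⅓ - τ') ‖x'‖² - ⅔ τ ⟪∇Φ(x), x - z⟫ + 2 τ τ' (Φ(x) - Φ(z))
  - ⅓ τ'' ‖x - z‖²`.
If the ball of radius `r` around `z` consists of minimizers, convexity yields
`Φ(x) - Φ(z) + r ‖∇Φ(x)‖ ≤ ⟪∇Φ(x), x - z⟫`. Hence, once `τ' ≤ κ < ⅓`,
`E' ≤ m (1 + E) - ⅔ r τ ‖∇Φ(x)‖` with `m` a combination of `τ ‖g‖` and the negative part of `τ''`,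
both integrable. Grönwall's inequality bounds `E`, and integrating once more bounds `∫ τ ‖∇Φ(x)‖`.
-/

section Gronwall

variable {W W' m q : ℝ → ℝ} {a : ℝ}

lemma add_intervalIntegral_le_of_hasDerivAt_le_sub {b : ℝ} (hab : a ≤ b)
    (hW : ∀ t ∈ Ici a, HasDerivAt W (W' t) t) (hm : IntegrableOn m (Ici a))
    (hq : LocallyIntegrableOn q (Ici a)) (hle : ∀ t ∈ Ici a, W' t ≤ m t - q t) :
    W b + ∫ t in a..b, q t ≤ W a + ∫ t in Ici a, ‖m t‖ := by
  have hm_Icc : IntegrableOn m (Icc a b) := hm.mono_set Icc_subset_Ici_self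
  have hq_Icc : IntegrableOn q (Icc a b) :=
    hq.integrableOn_compact_subset Icc_subset_Ici_self isCompact_Icc
  have hW_sub : W b - W a ≤ ∫ t in a..b, (m t - q t) :=
    intervalIntegral.sub_le_integral_of_hasDeriv_right_of_le hab
      (fun t ht ↦ (hW t ht.1).continuousAt.continuousWithinAt)
      (fun t ht ↦ (hW t ht.1.le).hasDerivWithinAt) (hm_Icc.sub hq_Icc)
      (fun t ht ↦ hle t ht.1.le)
  rw [intervalIntegral.integral_sub
    ((intervalIntegrable_iff_integrableOn_Icc_of_le hab).2 hm_Icc)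
    ((intervalIntegrable_iff_integrableOn_Icc_of_le hab).2 hq_Icc)] at hW_sub
  have hm_le : ∫ t in a..b, m t ≤ ∫ t in Ici a, ‖m t‖ :=
    calc ∫ t in a..b, m t
        ≤ ‖∫ t in a..b, m t‖ := le_norm_self _
      _ ≤ ∫ t in Ioc a b, ‖m t‖ := by
        simpa only [uIoc_of_le hab] using
          intervalIntegral.norm_integral_le_integral_norm_uIoc (f := m) (a := a) (b := b)
      _ ≤ ∫ t in Ici a, ‖m t‖ :=
        setIntegral_mono_set hm.norm (Eventually.of_forall fun t ↦ norm_nonneg _)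
          (Ioc_subset_Ioi_self.trans Ioi_subset_Ici_self).eventuallyLE
  linarith

lemma integrableOn_Ici_of_hasDerivAt_le_sub_s17 (hW0 : ∀ t ∈ Ici a, 0 ≤ W t)
    (hW : ∀ t ∈ Ici a, HasDerivAt W (W' t) t) (hm : IntegrableOn m (Ici a))
    (hq : LocallyIntegrableOn q (Ici a)) (hq0 : ∀ t ∈ Ici a, 0 ≤ q t)
    (hle : ∀ t ∈ Ici a, W' t ≤ m t - q t) : IntegrableOn q (Ici a) := by
  rw [integrableOn_Ici_iff_integrableOn_Ioi]
  refine integrableOn_Ioi_of_intervalIntegral_norm_bounded (W a + ∫ t in Ici a, ‖m t‖) a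
    (fun b ↦ (hq.integrableOn_compact_subset Icc_subset_Ici_self isCompact_Icc).mono_set
      Ioc_subset_Icc_self) tendsto_id ?_
  filter_upwards [eventually_ge_atTop a] with b hab
  have hnorm : ∫ t in a..b, ‖q t‖ = ∫ t in a..b, q t :=
    intervalIntegral.integral_congr fun t ht ↦
      Real.norm_of_nonneg (hq0 t (by rw [uIcc_of_le hab] at ht; exact ht.1))
  simp only [id]
  linarith [add_intervalIntegral_le_of_hasDerivAt_le_sub hab hW hm hq hle, hW0 b hab]

lemma bddAbove_image_Ici_of_hasDerivAt_le_mul_one_add (hW0 : ∀ t ∈ Ici a, 0 ≤ W t)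
    (hW : ∀ t ∈ Ici a, HasDerivAt W (W' t) t) (hm : IntegrableOn m (Ici a))
    (hle : ∀ t ∈ Ici a, W' t ≤ m t * (1 + W t)) : BddAbove (W '' Ici a) := by
  have hpos : ∀ t ∈ Ici a, 0 < 1 + W t := fun t ht ↦ by linarith [hW0 t ht]
  have hlog : ∀ t ∈ Ici a, HasDerivAt (fun s ↦ log (1 + W s)) (W' t / (1 + W t)) t :=
    fun t ht ↦ ((hW t ht).const_add 1).log (hpos t ht).ne'
  have hlog_le : ∀ t ∈ Ici a, W' t / (1 + W t) ≤ m t - 0 := fun t ht ↦ by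
    rw [sub_zero, div_le_iff₀ (hpos t ht)]
    exact hle t ht
  refine ⟨exp (log (1 + W a) + ∫ t in Ici a, ‖m t‖), ?_⟩
  rintro _ ⟨t, ht, rfl⟩
  have hbound := add_intervalIntegral_le_of_hasDerivAt_le_sub ht hlog hm
    (locallyIntegrableOn_const 0) hlog_le
  rw [intervalIntegral.integral_zero, add_zero, log_le_iff_le_exp (hpos t ht)] at hbound
  linarith

lemma integrableOn_Ici_of_hasDerivAt_le_mul_one_add_sub (hW0 : ∀ t ∈ Ici a, 0 ≤ W t)
    (hW : ∀ t ∈ Ici a, HasDerivAt W (W' t) t) (hm : IntegrableOn m (Ici a))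
    (hq : LocallyIntegrableOn q (Ici a)) (hq0 : ∀ t ∈ Ici a, 0 ≤ q t)
    (hle : ∀ t ∈ Ici a, W' t ≤ m t * (1 + W t) - q t) : IntegrableOn q (Ici a) := by
  obtain ⟨K, hK⟩ := bddAbove_image_Ici_of_hasDerivAt_le_mul_one_add hW0 hW hm
    fun t ht ↦ by linarith [hle t ht, hq0 t ht]
  refine integrableOn_Ici_of_hasDerivAt_le_sub_s17 hW0 hW (hm.norm.mul_const (1 + K)) hq hq0
    fun t ht ↦ (hle t ht).trans (sub_le_sub_right ?_ _)
  have hWK : W t ≤ K := hK (mem_image_of_mem W ht)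
  have hWt : 0 ≤ W t := hW0 t ht
  calc m t * (1 + W t) ≤ ‖m t‖ * (1 + W t) := by gcongr; exact le_norm_self _
    _ ≤ ‖m t‖ * (1 + K) := by gcongr

end Gronwall

section InnerProductSpace

variable {H : Type*} [NormedAddCommGroup H] [InnerProductSpace ℝ H]

section Gradient

variable [CompleteSpace H] {Φ : H → ℝ}

lemma hasDerivAt_comp_of_hasGradientAt {G v : H} {x : ℝ → H} {t : ℝ}
    (hΦ : HasGradientAt Φ G (x t)) (hx : HasDerivAt x v t) :
    HasDerivAt (fun s ↦ Φ (x s)) ⟪G, v⟫ t :=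
  (hΦ.hasFDerivAt.comp_hasDerivAt t hx).congr_deriv (by simp)

lemma add_inner_gradient_sub_le_of_convexOn {s : Set H} (hΦ : ConvexOn ℝ s Φ) {u p G : H}
    (hu : u ∈ s) (hp : p ∈ s) (hG : HasGradientAt Φ G u) : Φ u + ⟪G, p - u⟫ ≤ Φ p := by
  have hderiv : HasDerivAt (fun θ : ℝ ↦ Φ (AffineMap.lineMap u p θ)) ⟪G, p - u⟫ 0 :=
    hasDerivAt_comp_of_hasGradientAt (by simpa using hG) AffineMap.hasDerivAt_lineMap
  have hslope := (hΦ.comp_affineMap (AffineMap.lineMap u p)).le_slope_of_hasDerivAt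
    (by simpa using hu) (by simpa using hp) zero_lt_one hderiv
  simp only [slope_def_field, Function.comp_apply, AffineMap.lineMap_apply_one,
    AffineMap.lineMap_apply_zero, sub_zero, div_one] at hslope
  linarith

lemma add_mul_norm_gradient_le_of_convexOn {s : Set H} (hΦ : ConvexOn ℝ s Φ) {u z G : H}
    {r M : ℝ} (hr : 0 ≤ r) (hu : u ∈ s) (hs : Metric.closedBall z r ⊆ s)
    (hM : ∀ p ∈ Metric.closedBall z r, Φ p ≤ M) (hG : HasGradientAt Φ G u) :
    Φ u + r * ‖G‖ ≤ M + ⟪G, u - z⟫ := by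
  -- Test the subgradient inequality at the point of the ball furthest in the direction `G`.
  set e : H := (r * ‖G‖⁻¹) • G
  have he : z + e ∈ Metric.closedBall z r := by
    rw [mem_closedBall_iff_norm, add_sub_cancel_left, norm_smul,
      Real.norm_of_nonneg (by positivity), mul_assoc]
    exact mul_le_of_le_one_right hr (inv_mul_le_one_of_le₀ le_rfl (norm_nonneg G))
  have he_inner : ⟪G, e⟫ = r * ‖G‖ := by
    rw [real_inner_smul_right, real_inner_self_eq_norm_sq, pow_two, mul_assoc, ← mul_assoc ‖G‖⁻¹,
      inv_mul_mul_self]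
  have hsubgrad := add_inner_gradient_sub_le_of_convexOn hΦ hu (hs he) hG
  rw [show z + e - u = e - (u - z) by abel, inner_sub_right, he_inner] at hsubgrad
  linarith [hM _ he]

end Gradient

/-- `x`, with velocity `x'` and acceleration `x''`, solves the heavy ball equation with damping
coefficient `γ`, force field `-F` and source `g` on `[t₀, ∞)`. -/
structure IsHeavyBallSolution_s17 (γ : ℝ → ℝ) (F : H → H) (g x x' x'' : ℝ → H) (t₀ : ℝ) : Prop where
  hasDerivAt : ∀ t ∈ Ici t₀, HasDerivAt x (x' t) t
  hasDerivAt_velocity : ∀ t ∈ Ici t₀, HasDerivAt x' (x'' t) t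
  equation : ∀ t ∈ Ici t₀, x'' t + γ t • x' t + F (x t) = g t

/-- `γ` is a positive damping coefficient on `[t₀, ∞)` that does not decay too fast: the first two
derivatives `τ'` and `τ''` of `τ = 1 / γ` are such that `τ'` is eventually below some `κ < 1 / 3`
and `τ''` has an integrable negative part. The threshold is the one of Nesterov's damping:
`γ t = c / t` qualifies exactly when `c > 3`. -/
structure IsSlowlyDecayingDamping (γ τ' τ'' : ℝ → ℝ) (t₀ : ℝ) : Prop where
  pos : ∀ t ∈ Ici t₀, 0 < γ t
  hasDerivAt_inv : ∀ t ∈ Ici t₀, HasDerivAt (fun s ↦ (γ s)⁻¹) (τ' t) t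
  hasDerivAt_deriv_inv : ∀ t ∈ Ici t₀, HasDerivAt τ' (τ'' t) t
  eventually_deriv_inv_le : ∃ κ < (1 / 3 : ℝ), ∀ᶠ t in atTop, τ' t ≤ κ
  integrableOn_negPart : IntegrableOn (fun t ↦ (τ'' t)⁻) (Ici t₀)

lemma isSlowlyDecayingDamping_div_one_add_rpow {c α : ℝ} (hc : 0 < c) (hα : α < 1) :
    IsSlowlyDecayingDamping (fun t ↦ c / (1 + t) ^ α) (fun t ↦ α * (1 + t) ^ (α - 1) / c)
      (fun t ↦ α * ((α - 1) * (1 + t) ^ (α - 2)) / c) 0 := by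
  have hrpow (β t : ℝ) (ht : t ∈ Ici (0 : ℝ)) :
      HasDerivAt (fun s : ℝ ↦ (1 + s) ^ β) (β * (1 + t) ^ (β - 1)) t := by
    have ht' : 1 + t ≠ 0 := by linarith [mem_Ici.1 ht]
    simpa using ((hasDerivAt_id t).const_add 1).rpow_const (p := β) (Or.inl ht')
  refine ⟨fun t ht ↦ ?_, fun t ht ↦ ?_, fun t ht ↦ ?_, ⟨1 / 6, by norm_num, ?_⟩, ?_⟩
  · have ht' : 0 < 1 + t := by linarith [mem_Ici.1 ht]
    positivity
  · simpa only [inv_div] using (hrpow α t ht).div_const c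
  · simpa only [sub_sub, one_add_one_eq_two] using
      ((hrpow (α - 1) t ht).const_mul α).div_const c
  · have hlim : Tendsto (fun t : ℝ ↦ (1 + t) ^ (-(1 - α))) atTop (nhds 0) :=
      (tendsto_rpow_neg_atTop (by linarith)).comp (tendsto_atTop_add_const_left _ 1 tendsto_id)
    have hlim' := (hlim.const_mul α).div_const c
    rw [mul_zero, zero_div, neg_sub] at hlim'
    exact hlim'.eventually (ge_mem_nhds (by norm_num))
  · have hint : IntegrableOn (fun t : ℝ ↦ (t + 1) ^ (α - 2)) (Ici 0) :=
      (integrableOn_Ici_iff_integrableOn_Ioi).2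
        (integrableOn_add_rpow_Ioi_of_lt (by linarith) (by norm_num))
    simp only [add_comm _ (1 : ℝ)] at hint
    exact (((hint.const_mul (α - 1)).const_mul α).div_const c).neg_part

/-- The Lyapunov function of the heavy ball equation on phase space, at position `y` and velocity
`v`, where `τ` and `τ'` are the values of the inverse damping and of its derivative, and `z` is a
minimizer. The weight `2 / 3` makes the dissipation of the kinetic energy and that of the potential
energy change sign at the same value `τ' = 1 / 3`. -/
noncomputable def heavyBallEnergy (Φ : H → ℝ) (z : H) (τ τ' : ℝ) (y v : H) : ℝ :=
  τ ^ 2 * (Φ y - Φ z) + 1 / 2 * ‖τ • v + (2 / 3 : ℝ) • (y - z)‖ ^ 2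
    + 1 / 3 * (1 / 3 - τ') * ‖y - z‖ ^ 2

section Energy

variable {Φ : H → ℝ} {z y v : H} {τ τ' κ : ℝ}

lemma mul_sq_norm_sub_le_heavyBallEnergy (hz : Φ z ≤ Φ y) (hκ : τ' ≤ κ) :
    1 / 3 * (1 / 3 - κ) * ‖y - z‖ ^ 2 ≤ heavyBallEnergy Φ z τ τ' y v := by
  have hpot : 0 ≤ τ ^ 2 * (Φ y - Φ z) := mul_nonneg (sq_nonneg τ) (sub_nonneg.2 hz)
  have hkin : 0 ≤ 1 / 2 * ‖τ • v + (2 / 3 : ℝ) • (y - z)‖ ^ 2 := by positivity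
  have hdist : 1 / 3 * (1 / 3 - κ) * ‖y - z‖ ^ 2 ≤ 1 / 3 * (1 / 3 - τ') * ‖y - z‖ ^ 2 := by gcongr
  unfold heavyBallEnergy
  linarith

lemma heavyBallEnergy_nonneg (hz : Φ z ≤ Φ y) (hτ' : τ' ≤ 1 / 3) :
    0 ≤ heavyBallEnergy Φ z τ τ' y v := by
  simpa using mul_sq_norm_sub_le_heavyBallEnergy (τ := τ) (v := v) hz hτ'

lemma norm_smul_add_smul_sub_le_one_add_heavyBallEnergy (hz : Φ z ≤ Φ y) (hτ' : τ' ≤ 1 / 3) :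
    ‖τ • v + (2 / 3 : ℝ) • (y - z)‖ ≤ 1 + heavyBallEnergy Φ z τ τ' y v := by
  have hpot : 0 ≤ τ ^ 2 * (Φ y - Φ z) := mul_nonneg (sq_nonneg τ) (sub_nonneg.2 hz)
  have hdist : 0 ≤ 1 / 3 * (1 / 3 - τ') * ‖y - z‖ ^ 2 :=
    mul_nonneg (by linarith) (sq_nonneg _)
  unfold heavyBallEnergy
  linarith [sq_nonneg (‖τ • v + (2 / 3 : ℝ) • (y - z)‖ - 1)]

/-- The time derivative of `heavyBallEnergy` along solutions of the heavy ball equation; `τ''` is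
the second derivative of the inverse damping, `G` the gradient at `y` and `f` the source. -/
noncomputable def heavyBallEnergyRate (Φ : H → ℝ) (z : H) (τ τ' τ'' : ℝ) (y v G f : H) : ℝ :=
  τ * ⟪f, τ • v + (2 / 3 : ℝ) • (y - z)⟫ - τ * (1 / 3 - τ') * ‖v‖ ^ 2
    - 2 / 3 * τ * ⟪G, y - z⟫ + 2 * τ * τ' * (Φ y - Φ z) - 1 / 3 * τ'' * ‖y - z‖ ^ 2

lemma heavyBallEnergyRate_le {τ'' r : ℝ} {G f : H} (hz : Φ z ≤ Φ y) (hτ : 0 ≤ τ) (hτ' : τ' ≤ κ)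
    (hκ : κ < 1 / 3) (hG : Φ y + r * ‖G‖ ≤ Φ z + ⟪G, y - z⟫) :
    heavyBallEnergyRate Φ z τ τ' τ'' y v G f ≤
      (τ * ‖f‖ + (1 / 3 - κ)⁻¹ * τ''⁻) * (1 + heavyBallEnergy Φ z τ τ' y v)
        - 2 / 3 * r * (τ * ‖G‖) := by
  set E := heavyBallEnergy Φ z τ τ' y v
  have hτ'_le : τ' ≤ 1 / 3 := hτ'.trans hκ.le
  have hκ_pos : 0 < 1 / 3 - κ := sub_pos.2 hκ
  have hsource : τ * ⟪f, τ • v + (2 / 3 : ℝ) • (y - z)⟫ ≤ τ * ‖f‖ * (1 + E) := by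
    rw [mul_assoc]
    gcongr
    exact (real_inner_le_norm _ _).trans (mul_le_mul_of_nonneg_left
      (norm_smul_add_smul_sub_le_one_add_heavyBallEnergy hz hτ'_le) (norm_nonneg f))
  have hkinetic : 0 ≤ τ * (1 / 3 - τ') * ‖v‖ ^ 2 :=
    mul_nonneg (mul_nonneg hτ (sub_nonneg.2 hτ'_le)) (sq_nonneg _)
  have hpotential : 0 ≤ τ * (1 / 3 - τ') * (Φ y - Φ z) :=
    mul_nonneg (mul_nonneg hτ (sub_nonneg.2 hτ'_le)) (sub_nonneg.2 hz)
  have hgradient : 2 / 3 * τ * (Φ y - Φ z + r * ‖G‖) ≤ 2 / 3 * τ * ⟪G, y - z⟫ := by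
    gcongr
    linarith
  have hcurvature : -(1 / 3 * τ'' * ‖y - z‖ ^ 2) ≤ (1 / 3 - κ)⁻¹ * τ''⁻ * (1 + E) :=
    calc -(1 / 3 * τ'' * ‖y - z‖ ^ 2)
        = -τ'' * (1 / 3 * ‖y - z‖ ^ 2) := by ring
      _ ≤ τ''⁻ * (1 / 3 * ‖y - z‖ ^ 2) := by gcongr; exact neg_le_negPart τ''
      _ = (1 / 3 - κ)⁻¹ * τ''⁻ * (1 / 3 * (1 / 3 - κ) * ‖y - z‖ ^ 2) := by
        linear_combination -(τ''⁻ * (1 / 3 * ‖y - z‖ ^ 2)) * inv_mul_cancel₀ hκ_pos.ne'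
      _ ≤ (1 / 3 - κ)⁻¹ * τ''⁻ * (1 + E) := by
        gcongr
        linarith [mul_sq_norm_sub_le_heavyBallEnergy (τ := τ) (v := v) hz hτ']
  unfold heavyBallEnergyRate
  linarith

end Energy

section HeavyBall

variable {Φ : H → ℝ} {Φ' : H → H} {g x x' x'' : ℝ → H} {γ τ' τ'' : ℝ → ℝ} {t₀ : ℝ}

lemma IsHeavyBallSolution_s17.continuousOn_inv_damping_mul_norm
    (hx : IsHeavyBallSolution_s17 γ Φ' g x x' x'' t₀) (hγ : IsSlowlyDecayingDamping γ τ' τ'' t₀)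
    (hΦ' : Continuous Φ') : ContinuousOn (fun t ↦ (γ t)⁻¹ * ‖Φ' (x t)‖) (Ici t₀) := fun t ht ↦
  ((hγ.hasDerivAt_inv t ht).continuousAt.mul
    (hΦ'.continuousAt.comp (hx.hasDerivAt t ht).continuousAt).norm).continuousWithinAt

variable [CompleteSpace H]

lemma IsHeavyBallSolution_s17.hasDerivAt_heavyBallEnergy
    (hx : IsHeavyBallSolution_s17 γ Φ' g x x' x'' t₀) (hγ : IsSlowlyDecayingDamping γ τ' τ'' t₀)
    {t : ℝ} (ht : t ∈ Ici t₀) (hΦ : HasGradientAt Φ (Φ' (x t)) (x t)) (z : H) :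
    HasDerivAt (fun s ↦ heavyBallEnergy Φ z (γ s)⁻¹ (τ' s) (x s) (x' s))
      (heavyBallEnergyRate Φ z (γ t)⁻¹ (τ' t) (τ'' t) (x t) (x' t) (Φ' (x t)) (g t)) t := by
  have hτ := hγ.hasDerivAt_inv t ht
  have hy := (hx.hasDerivAt t ht).sub_const z
  have hpot := (hasDerivAt_comp_of_hasGradientAt hΦ (hx.hasDerivAt t ht)).sub_const (Φ z)
  have hkin := (hτ.smul (hx.hasDerivAt_velocity t ht)).add (hy.const_smul (2 / 3 : ℝ))
  have hcoef := ((hγ.hasDerivAt_deriv_inv t ht).const_sub (1 / 3)).const_mul (1 / 3)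
  have hacc : (γ t)⁻¹ • x'' t = (γ t)⁻¹ • g t - x' t - (γ t)⁻¹ • Φ' (x t) := by
    rw [← hx.equation t ht, smul_add, smul_add, inv_smul_smul₀ (hγ.pos t ht).ne']
    abel
  refine ((((hτ.pow 2).mul hpot).add (hkin.norm_sq.const_mul (1 / 2))).add
    (hcoef.mul hy.norm_sq)).congr_deriv ?_
  simp only [hacc, heavyBallEnergyRate, Pi.add_apply, Pi.smul_apply, Pi.smul_apply', Pi.pow_apply,
    inner_add_left, inner_add_right, inner_sub_right, real_inner_smul_right,
    real_inner_self_eq_norm_sq, real_inner_comm]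
  ring

lemma IsHeavyBallSolution_s17.integrableOn_inv_damping_mul_norm_of_deriv_inv_le
    (hx : IsHeavyBallSolution_s17 γ Φ' g x x' x'' t₀) (hγ : IsSlowlyDecayingDamping γ τ' τ'' t₀)
    (hΦconv : ConvexOn ℝ univ Φ) (hΦ : ∀ u, HasGradientAt Φ (Φ' u) u) (hΦ' : Continuous Φ')
    (hg : IntegrableOn (fun t ↦ (γ t)⁻¹ * ‖g t‖) (Ici t₀)) {z : H} {r : ℝ} (hr : 0 < r)
    (hball : Metric.closedBall z r ⊆ {v | ∀ u, Φ v ≤ Φ u}) {κ T : ℝ} (hκ : κ < 1 / 3)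
    (hT : t₀ ≤ T) (hTκ : ∀ t ∈ Ici T, τ' t ≤ κ) :
    IntegrableOn (fun t ↦ (γ t)⁻¹ * ‖Φ' (x t)‖) (Ici T) := by
  have hTt₀ : Ici T ⊆ Ici t₀ := Ici_subset_Ici.2 hT
  have hz : ∀ u, Φ z ≤ Φ u := hball (Metric.mem_closedBall_self hr.le)
  have hinv : ∀ t ∈ Ici T, 0 ≤ (γ t)⁻¹ := fun t ht ↦ (inv_pos.2 (hγ.pos t (hTt₀ ht))).le
  have hgrad (u : H) : Φ u + r * ‖Φ' u‖ ≤ Φ z + ⟪Φ' u, u - z⟫ :=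
    add_mul_norm_gradient_le_of_convexOn hΦconv hr.le (mem_univ u) (subset_univ _)
      (fun p hp ↦ hball hp z) (hΦ u)
  have hcont := ((hx.continuousOn_inv_damping_mul_norm hγ hΦ').mono hTt₀).const_mul (2 / 3 * r)
  have hint : IntegrableOn (fun t ↦ 2 / 3 * r * ((γ t)⁻¹ * ‖Φ' (x t)‖)) (Ici T) :=
    integrableOn_Ici_of_hasDerivAt_le_mul_one_add_sub
      (fun t ht ↦ heavyBallEnergy_nonneg (hz (x t)) ((hTκ t ht).trans hκ.le))
      (fun t ht ↦ hx.hasDerivAt_heavyBallEnergy hγ (hTt₀ ht) (hΦ (x t)) z)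
      ((hg.add (hγ.integrableOn_negPart.const_mul (1 / 3 - κ)⁻¹)).mono_set hTt₀)
      (hcont.locallyIntegrableOn measurableSet_Ici)
      (fun t ht ↦ mul_nonneg (by positivity) (mul_nonneg (hinv t ht) (norm_nonneg _)))
      (fun t ht ↦ heavyBallEnergyRate_le (hz (x t)) (hinv t ht) (hTκ t ht) hκ (hgrad (x t)))
  exact (integrable_const_mul_iff (by positivity : 2 / 3 * r ≠ 0).isUnit _).1 hint

theorem heavy_ball_gradient_integrable_general
    (hx : IsHeavyBallSolution_s17 γ Φ' g x x' x'' t₀) (hγ : IsSlowlyDecayingDamping γ τ' τ'' t₀)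
    (hΦconv : ConvexOn ℝ univ Φ) (hΦ : ∀ u, HasGradientAt Φ (Φ' u) u) (hΦ' : Continuous Φ')
    (hg : IntegrableOn (fun t ↦ (γ t)⁻¹ * ‖g t‖) (Ici t₀))
    (hint : (interior {v | ∀ u, Φ v ≤ Φ u}).Nonempty) :
    IntegrableOn (fun t ↦ (γ t)⁻¹ * ‖Φ' (x t)‖) (Ici t₀) := by
  obtain ⟨z, hz⟩ := hint
  obtain ⟨r, hr, hball⟩ := Metric.nhds_basis_closedBall.mem_iff.1 (mem_interior_iff_mem_nhds.1 hz)
  obtain ⟨κ, hκ, hτ'⟩ := hγ.eventually_deriv_inv_le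
  obtain ⟨T, hT, hTκ⟩ := (atTop_basis' t₀).eventually_iff.1 hτ'
  rw [integrableOn_Ici_iff_integrableAtFilter_atTop]
  exact ⟨⟨Ici T, Ici_mem_atTop T,
      hx.integrableOn_inv_damping_mul_norm_of_deriv_inv_le hγ hΦconv hΦ hΦ' hg hr hball hκ hT
        @hTκ⟩,
    (hx.continuousOn_inv_damping_mul_norm hγ hΦ').locallyIntegrableOn measurableSet_Ici⟩

end HeavyBall

end InnerProductSpace

theorem heavy_ball_gradient_integrable
    {H : Type*} [NormedAddCommGroup H] [InnerProductSpace ℝ H] [CompleteSpace H]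
    (c α : ℝ) (hc : 0 < c) (hα0 : 0 ≤ α) (hα1 : α < 1)
    (Φ : H → ℝ) (Φ' : H → H) (Φstar : ℝ)
    (hΦconv : ConvexOn ℝ Set.univ Φ)
    (hΦdiff : ∀ u : H, HasGradientAt Φ (Φ' u) u)
    (hΦcont : Continuous Φ')
    (hargmin : {v : H | ∀ u, Φ v ≤ Φ u}.Nonempty)
    (hΦstar : ∀ v ∈ {v : H | ∀ u, Φ v ≤ Φ u}, Φ v = Φstar)
    (g : ℝ → H) (hg : IntegrableOn g (Ici (0:ℝ)))
    (x x' x'' : ℝ → H)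
    (hx1 : ∀ t ∈ Ici (0:ℝ), HasDerivAt x (x' t) t)
    (hx2 : ∀ t ∈ Ici (0:ℝ), HasDerivAt x' (x'' t) t)
    (hode : ∀ t ∈ Ici (0:ℝ),
      x'' t + (c / (1 + t) ^ α) • x' t + Φ' (x t) = g t)
    (hgα : IntegrableOn (fun t => (1 + t) ^ α * ‖g t‖) (Ici (0:ℝ)))
    (hint : (interior {v : H | ∀ u, Φ v ≤ Φ u}).Nonempty) :
    IntegrableOn (fun t => (c / (1 + t) ^ α)⁻¹ * ‖Φ' (x t)‖) (Ici (0:ℝ)) := by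
  have hgγ : IntegrableOn (fun t ↦ (c / (1 + t) ^ α)⁻¹ * ‖g t‖) (Ici 0) := by
    simpa only [IntegrableOn, inv_div, div_mul_eq_mul_div] using hgα.div_const c
  exact heavy_ball_gradient_integrable_general ⟨hx1, hx2, hode⟩
    (isSlowlyDecayingDamping_div_one_add_rpow hc hα1) hΦconv hΦdiff hΦcont hgγ hint
end

section
/- Let Φ : H → ℝ be a convex C¹ function and suppose the closed ball of center z₀ and radius r > 0 is contained in argmin Φ. Then for every z ∈ H, ⟨∇Φ(z), z − z₀⟩ ≥ r ‖∇Φ(z)‖. -/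
open MeasureTheory Filter Real Set RealInnerProductSpace

/-!
On the segment from `z` to a point `w` where `Φ` is no larger than at `z`, a quasiconvex `Φ` attains
its maximum at `z`, so its derivative at `z` satisfies `Φ' w ≤ Φ' z`. The supremum of a continuous
linear functional `f` over the closed ball of center `z₀` and radius `r` is `f z₀ + r * ‖f‖`;
hence, if that ball consists of such points `w`, `Φ' z₀ + r * ‖Φ'‖ ≤ Φ' z`.
-/

section NormedSpace

variable {E : Type*} [NormedAddCommGroup E] [NormedSpace ℝ E]

theorem apply_add_mul_opNorm_le_of_forall_mem_closedBall_le {f : StrongDual ℝ E} {x : E} {r c : ℝ}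
    (hr : 0 ≤ r) (hf : ∀ y ∈ Metric.closedBall x r, f y ≤ c) : f x + r * ‖f‖ ≤ c := by
  rcases hr.eq_or_lt with rfl | hr
  · simpa using hf x
  have apply_le (v : E) (hv : ‖v‖ ≤ r) : f v ≤ c - f x := by
    have hxv := hf (x + v) (by simpa using hv)
    rw [map_add] at hxv
    linarith
  have norm_apply_le (v : E) (hv : v ∈ Metric.closedBall 0 r) : ‖f v‖ ≤ c - f x := by
    rw [mem_closedBall_zero_iff] at hv
    have hneg : -f v ≤ c - f x := map_neg f v ▸ apply_le (-v) (by rwa [norm_neg])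
    exact abs_le'.mpr ⟨apply_le v hv, hneg⟩
  have hnorm : ‖f‖ * r ≤ c - f x :=
    (le_div_iff₀ hr).mp (f.opNorm_bound_of_ball_bound hr (c - f x) norm_apply_le)
  linarith

theorem hasFDerivWithinAt_apply_sub_nonpos_of_quasiconvexOn {Φ : E → ℝ} {Φ' : StrongDual ℝ E}
    {s : Set E} {w z : E} (hΦ : QuasiconvexOn ℝ s Φ) (hΦ' : HasFDerivWithinAt Φ Φ' s z)
    (hz : z ∈ s) (hw : w ∈ s) (hwz : Φ w ≤ Φ z) : Φ' (w - z) ≤ 0 := by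
  have hsegment : segment ℝ z w ⊆ {x ∈ s | Φ x ≤ Φ z} :=
    (hΦ (Φ z)).segment_subset ⟨hz, le_rfl⟩ ⟨hw, hwz⟩
  have hmax : IsMaxOn Φ {x ∈ s | Φ x ≤ Φ z} z := fun _ hx ↦ hx.2
  exact hmax.localize.hasFDerivWithinAt_nonpos (hΦ'.mono (sep_subset s _))
    (sub_mem_posTangentConeAt_of_segment_subset hsegment)

theorem gradient_inner_lower_bound_general {Φ : E → ℝ} {Φ' : StrongDual ℝ E} {s : Set E}
    {z z₀ : E} {r : ℝ} (hΦ : QuasiconvexOn ℝ s Φ) (hΦ' : HasFDerivWithinAt Φ Φ' s z)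
    (hz : z ∈ s) (hr : 0 ≤ r) (hball : Metric.closedBall z₀ r ⊆ {w ∈ s | Φ w ≤ Φ z}) :
    r * ‖Φ'‖ ≤ Φ' (z - z₀) := by
  have apply_le (w : E) (hw : w ∈ Metric.closedBall z₀ r) : Φ' w ≤ Φ' z := by
    obtain ⟨hws, hwz⟩ := hball hw
    rw [← sub_nonpos, ← map_sub]
    exact hasFDerivWithinAt_apply_sub_nonpos_of_quasiconvexOn hΦ hΦ' hz hws hwz
  rw [map_sub, le_sub_iff_add_le']
  exact apply_add_mul_opNorm_le_of_forall_mem_closedBall_le hr apply_le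

end NormedSpace

theorem gradient_inner_lower_bound
    {H : Type*} [NormedAddCommGroup H] [InnerProductSpace ℝ H] [CompleteSpace H]
    (Φ : H → ℝ) (Φ' : H → H)
    (hΦconv : ConvexOn ℝ Set.univ Φ)
    (hΦdiff : ∀ u : H, HasGradientAt Φ (Φ' u) u)
    (hΦcont : Continuous Φ')
    (z₀ : H) (r : ℝ) (hr : 0 < r)
    (hball : Metric.closedBall z₀ r ⊆ {v : H | ∀ u, Φ v ≤ Φ u}) :
    ∀ z : H, r * ‖Φ' z‖ ≤ ⟪Φ' z, z - z₀⟫ := by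
  intro z
  simpa using gradient_inner_lower_bound_general hΦconv.quasiconvexOn
    (hΦdiff z).hasFDerivAt.hasFDerivWithinAt (mem_univ z) hr.le fun w hw ↦ ⟨mem_univ w, hball hw z⟩
end
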